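/- arXiv:2303.08596 — 3 statements merged into one kernel-verified Lean document; each statement's English description precedes it below -/
import Mathlib

section
/- Fourier–Pontryagin duality, spin side on divergence-free forms (Lemma 2.2, case # = ⋄): Assume G is connected and fix a boundary vertex ∂ ∈ V. For every ε ∈ ℝ^E one has Σ_{h: V→ℤ, h_∂ = 0} e^{i(dh,ε)} Π_{e∈E} e^{−𝒱((dh)_e)} = ∫_{ker(d*)} Π_{e∈E} w(J_e + ε_e) dHaar(J), where the integral is with respect to the Haar probability measure of the compact group ker(d*) ⊆ (ℝ/2πℤ)^E and w is extended 2π-periodically to ℝ. In particular ν_★[e^{i(dh,ε)}] = Z_⋄(ε)/Z_⋄(0), where Z_⋄(ε) denotes the integral above. -/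
/-!
Expand each weight `w(J_e + ε_e)` as an absolutely convergent Fourier series and multiply out over
the edges: the integrand becomes a sum over integer 1-forms `m : E → ℤ` of
`∏ p(m_e) · e^{i(m,ε)} · χ_m(J)`, where `χ_m(J) = e^{i(m,J)}` is a character of `(ℝ/2πℤ)^E`.
By dominated convergence it can be integrated term by term. Translation invariance of the Haar
measure of `ker d*` makes `∫ χ_m` equal to `1` if `χ_m` is trivial on `ker d*` and `0` otherwise,
and the annihilator of `ker d*` in `ℤ^E` is the set of gradients of integer functions
(`exists_grad_eq`). On a connected graph, a gradient determines its potential once the value at the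
boundary vertex is fixed (`grad_injective`), so the surviving terms are indexed by the height
functions.

If `χ_m` annihilates `ker d*`, the potential is found as follows. By connectivity each vertex `x` is
reached from `bd` by an integer flow `c_x`, with `d* c_x = δ_x - δ_bd`, and `h x := (m, c_x)` works:
for an edge `e = (a, b)` the form `c_a + 1_e - c_b` is an integer circulation, all of whose real
multiples lie in `ker d*`, which forces `(m, c_a + 1_e - c_b) = 0`.
-/

open MeasureTheory Real
noncomputable section

instance : Fact (0 < 2 * π) := ⟨by positivity⟩

/-- `Real.Angle = ℝ/2πℤ` with its Borel σ-algebra. -/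
instance : MeasurableSpace Real.Angle := by unfold Real.Angle; infer_instance

/-- Gradient of a `G`-valued function on the vertices: `(df)_e = f(tgt e) - f(src e)`. -/
def grad {V E G : Type*} [AddCommGroup G] (src tgt : E → V) (f : V → G) : E → G :=
  fun e => f (tgt e) - f (src e)

/-- Divergence of a `G`-valued 1-form: `(d*ω)_x = Σ_{e : tgt e = x} ω_e - Σ_{e : src e = x} ω_e`. -/
def divg {V E G : Type*} [Fintype E] [DecidableEq V] [AddCommGroup G]
    (src tgt : E → V) (ω : E → G) : V → G :=
  fun x => (∑ e, if tgt e = x then ω e else 0) - ∑ e, if src e = x then ω e else 0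

/-- Connectivity of the (multi)graph encoded by `src, tgt : E → V`. -/
def IsConn {V E : Type*} (src tgt : E → V) : Prop :=
  ∀ x y : V, Relation.ReflTransGen
    (fun a b => ∃ e, (src e = a ∧ tgt e = b) ∨ (src e = b ∧ tgt e = a)) x y

/-- The spin weight `w(α) = Σ_{n∈ℤ} e^{-𝒱(n)} e^{inα}`, written with `p n = e^{-𝒱(n)}`;
since `p` is symmetric this real (cosine) form agrees with the exponential form. -/
def wgt (p : ℤ → ℝ) (α : ℝ) : ℝ := ∑' n : ℤ, p n * Real.cos (n * α)

/-- `lam` is the Haar probability measure of the compact group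
`ker(d*) ⊆ (ℝ/2πℤ)^E`: it is a probability measure, it is carried by `ker(d*)`, and it is
invariant under translation by every element of `ker(d*)`.  (These properties characterise
the Haar probability measure uniquely.) -/
def IsKerHaar {V E : Type*} [Fintype E] [DecidableEq V] (src tgt : E → V)
    (lam : Measure (E → Real.Angle)) : Prop :=
  IsProbabilityMeasure lam ∧
  lam {J | divg src tgt J = 0} = 1 ∧
  ∀ J₀ : E → Real.Angle, divg src tgt J₀ = 0 →
    Measure.map (fun J => J₀ + J) lam = lam

namespace KerHaarDuality

instance : BorelSpace Real.Angle := inferInstanceAs (BorelSpace (AddCircle (2 * π)))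

instance : SecondCountableTopology Real.Angle :=
  inferInstanceAs (SecondCountableTopology (AddCircle (2 * π)))

/-! ### Products of absolutely convergent series -/

/-- Counting measure on `E → ℤ` is the product of the counting measures, so that Fubini for finite
products gives the distributive law for products of series. -/
lemma pi_count_eq {E : Type*} [Fintype E] :
    Measure.pi (fun _ : E => (Measure.count : Measure ℤ)) = Measure.count := by
  refine Measure.ext_of_singleton fun x => ?_
  rw [Measure.pi_singleton]
  simp

lemma summable_norm_prod {E : Type*} [Fintype E] {f : E → ℤ → ℂ}
    (hf : ∀ e, Summable fun n => ‖f e n‖) :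
    Summable fun m : E → ℤ => ‖∏ e, f e (m e)‖ := by
  have h := Integrable.fintype_prod (μ := fun _ : E => (Measure.count : Measure ℤ)) (f := f)
    fun e => integrable_count_iff.mpr (hf e)
  rw [pi_count_eq] at h
  exact integrable_count_iff.mp h

lemma prod_tsum {E : Type*} [Fintype E] {f : E → ℤ → ℂ}
    (hf : ∀ e, Summable fun n => ‖f e n‖) :
    ∏ e, ∑' n, f e n = ∑' m : E → ℤ, ∏ e, f e (m e) := by
  have h := integral_fintype_prod_eq_prod (μ := fun _ : E => (Measure.count : Measure ℤ)) f
  rw [pi_count_eq, integral_countable (integrable_count_iff.mpr (summable_norm_prod hf))] at h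
  simp only [measureReal_def, Measure.count_singleton, ENNReal.toReal_one, one_smul] at h
  rw [h]
  refine Finset.prod_congr rfl fun e _ => ?_
  rw [integral_countable (integrable_count_iff.mpr (hf e))]
  simp [measureReal_def]

/-! ### The Fourier series of the weight -/

lemma summable_of_sq {p : ℤ → ℝ} (hnonneg : ∀ n, 0 ≤ p n)
    (hsum : Summable fun n : ℤ => (n : ℝ) ^ 2 * p n) : Summable p := by
  -- off the single index `0`, the factor `n ^ 2` is at least `1`
  refine Summable.of_norm_bounded_eventually hsum ?_
  filter_upwards [(Set.finite_singleton (0 : ℤ)).compl_mem_cofinite] with n hn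
  have hn0 : n ≠ 0 := hn
  have h1 : (1 : ℝ) ≤ (n : ℝ) ^ 2 := by
    have : 1 ≤ n ^ 2 := by have := sq_pos_of_ne_zero hn0; lia
    exact_mod_cast this
  rw [Real.norm_of_nonneg (hnonneg n)]
  nlinarith [hnonneg n]

lemma norm_term {p : ℤ → ℝ} (hnonneg : ∀ n, 0 ≤ p n) (α : ℝ) (n : ℤ) :
    ‖(p n : ℂ) * Complex.exp (((n * α : ℝ) : ℂ) * Complex.I)‖ = p n := by
  rw [norm_mul, Complex.norm_exp_ofReal_mul_I, mul_one, Complex.norm_real,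
    Real.norm_of_nonneg (hnonneg n)]

/-- The exponential form of the cosine series `wgt`. -/
lemma wgt_eq {p : ℤ → ℝ} (hsym : ∀ n, p (-n) = p n) (hnonneg : ∀ n, 0 ≤ p n)
    (hp : Summable p) (α : ℝ) :
    (wgt p α : ℂ) = ∑' n : ℤ, (p n : ℂ) * Complex.exp (((n * α : ℝ) : ℂ) * Complex.I) := by
  have hs : Summable fun n : ℤ => (p n : ℂ) * Complex.exp (((n * α : ℝ) : ℂ) * Complex.I) :=
    Summable.of_norm (by simpa only [norm_term hnonneg] using hp)
  have hre (n : ℤ) : ((p n : ℂ) * Complex.exp (((n * α : ℝ) : ℂ) * Complex.I)).re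
      = p n * Real.cos (n * α) := by
    rw [Complex.re_ofReal_mul, Complex.exp_ofReal_mul_I_re]
  have him (n : ℤ) : ((p n : ℂ) * Complex.exp (((n * α : ℝ) : ℂ) * Complex.I)).im
      = p n * Real.sin (n * α) := by
    rw [Complex.im_ofReal_mul, Complex.exp_ofReal_mul_I_im]
  apply Complex.ext
  · rw [Complex.re_tsum hs, Complex.ofReal_re]
    simp only [hre, wgt]
  · rw [Complex.im_tsum hs, Complex.ofReal_im]
    simp only [him]
    -- the sine series is odd in `n`
    have h := (Equiv.neg ℤ).tsum_eq fun n : ℤ => p n * Real.sin (n * α)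
    simp only [Equiv.neg_apply, hsym, Int.cast_neg, neg_mul, Real.sin_neg, mul_neg,
      tsum_neg] at h
    linarith

/-! ### Gradients, divergences and circulations -/

section Graph

variable {V E : Type*} [Fintype E] [DecidableEq V] {src tgt : E → V}

lemma divg_add {G : Type*} [AddCommGroup G] (a b : E → G) :
    divg src tgt (a + b) = divg src tgt a + divg src tgt b := by
  funext x
  simp only [divg, Pi.add_apply, ← Finset.sum_filter, Finset.sum_add_distrib]
  abel

lemma divg_map {G H : Type*} [AddCommGroup G] [AddCommGroup H] (φ : G →+ H) (a : E → G) (x : V) :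
    divg src tgt (fun e => φ (a e)) x = φ (divg src tgt a x) := by
  simp only [divg, ← Finset.sum_filter, map_sub, map_sum]

lemma divg_neg {G : Type*} [AddCommGroup G] (a : E → G) :
    divg src tgt (-a) = -divg src tgt a := by
  funext x
  exact divg_map (negAddMonoidHom : G →+ G) a x

lemma divg_single [DecidableEq E] (e : E) :
    divg src tgt (Pi.single e (1 : ℤ)) = Pi.single (tgt e) 1 - Pi.single (src e) 1 := by
  funext x
  have key (v : E → V) : (∑ e', if v e' = x then (Pi.single e (1 : ℤ) : E → ℤ) e' else 0)
      = (Pi.single (v e) (1 : ℤ) : V → ℤ) x := by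
    rw [Finset.sum_eq_single e]
    · simp [Pi.single_apply, eq_comm]
    · intro b _ hb; simp [hb]
    · simp
  simp only [divg, key, Pi.sub_apply]

/-- An integer unit flow from `a` to `b`. -/
lemma exists_flow (hconn : IsConn src tgt) (a b : V) :
    ∃ c : E → ℤ, divg src tgt c = Pi.single b 1 - Pi.single a 1 := by
  classical
  induction hconn a b with
  | refl => exact ⟨0, by funext x; simp [divg]⟩
  | tail _ h ih =>
    obtain ⟨c, hc⟩ := ih
    obtain ⟨e, ⟨rfl, rfl⟩ | ⟨rfl, rfl⟩⟩ := h
    · exact ⟨c + Pi.single e 1, by rw [divg_add, hc, divg_single]; abel⟩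
    · exact ⟨c + -Pi.single e 1, by rw [divg_add, divg_neg, hc, divg_single]; abel⟩

/-- Summation by parts: a gradient pairs to zero with every divergence-free form. -/
lemma grad_pairing_eq_zero [Fintype V] (h : V → ℤ) {G : Type*} [AddCommGroup G] {J : E → G}
    (hJ : divg src tgt J = 0) : ∑ e, grad src tgt h e • J e = 0 := by
  have key (v : E → V) : ∑ x, h x • (∑ e, if v e = x then J e else 0) = ∑ e, h (v e) • J e := by
    simp_rw [Finset.smul_sum]
    rw [Finset.sum_comm]
    simp
  have h0 : ∑ x, h x • divg src tgt J x = 0 := by simp [hJ]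
  simp only [divg, smul_sub, Finset.sum_sub_distrib, key] at h0
  simpa only [grad, sub_smul, Finset.sum_sub_distrib] using h0

/-- A form that annihilates `ker d*` in `ℝ/2πℤ` annihilates the integer circulations. -/
lemma pairing_circulation {m : E → ℤ}
    (hm : ∀ J : E → Real.Angle, divg src tgt J = 0 → ∑ e, m e • J e = 0)
    {c : E → ℤ} (hc : divg src tgt c = 0) : ∑ e, m e * c e = 0 := by
  have hθ (θ : Real.Angle) : (∑ e, m e * c e) • θ = 0 := by
    rw [Finset.sum_smul]
    simp_rw [mul_smul]
    refine hm _ ?_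
    funext x
    refine (divg_map (zmultiplesHom Real.Angle θ) c x).trans ?_
    simp [hc]
  by_contra hN
  -- an integer `N ≠ 0` does not kill the angle `π / N`
  have h := hθ ((π / ((∑ e, m e * c e : ℤ) : ℝ) : ℝ) : Real.Angle)
  rw [← Real.Angle.coe_zsmul, zsmul_eq_mul, mul_div_cancel₀ _ (Int.cast_ne_zero.mpr hN)] at h
  exact Real.Angle.pi_ne_zero h

/-- The annihilator of `ker d*` consists of gradients. -/
lemma exists_grad_eq (hconn : IsConn src tgt) (bd : V) {m : E → ℤ}
    (hm : ∀ J : E → Real.Angle, divg src tgt J = 0 → ∑ e, m e • J e = 0) :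
    ∃ h : V → ℤ, h bd = 0 ∧ grad src tgt h = m := by
  classical
  choose c hc using exists_flow hconn bd
  refine ⟨fun x => ∑ e, m e * c x e, ?_, ?_⟩
  · exact pairing_circulation hm (by rw [hc, sub_self])
  · funext e
    have h0 := pairing_circulation hm (c := c (src e) + Pi.single e 1 + -c (tgt e)) (by
      rw [divg_add, divg_add, divg_neg, hc, hc, divg_single]; abel)
    simp only [Pi.add_apply, Pi.neg_apply, mul_add, mul_neg, Finset.sum_add_distrib,
      Finset.sum_neg_distrib] at h0
    have h1 : ∑ e', m e' * (Pi.single e (1 : ℤ) : E → ℤ) e' = m e := by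
      simp [Pi.single_apply]
    simp only [grad]
    lia

end Graph

lemma grad_injective {V E : Type*} {src tgt : E → V} (hconn : IsConn src tgt) (bd : V) :
    Function.Injective fun h : {h : V → ℤ // h bd = 0} => grad src tgt h.1 := by
  rintro ⟨h, hh⟩ ⟨k, hk⟩ heq
  have he (e : E) : h (tgt e) - h (src e) = k (tgt e) - k (src e) := congrFun heq e
  apply Subtype.ext
  funext x
  change h x = k x
  induction hconn bd x with
  | refl => rw [hh, hk]
  | tail _ hs ih =>
    obtain ⟨e, ⟨rfl, rfl⟩ | ⟨rfl, rfl⟩⟩ := hs <;> have := he e <;> lia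

/-! ### Characters and their Haar integrals -/

section Characters

variable {V E : Type*} [Fintype E]

/-- The character `J ↦ e^{i(m,J)}` of the torus `(ℝ/2πℤ)^E`. -/
def chr (m : E → ℤ) (J : E → Real.Angle) : ℂ := ((∑ e, m e • J e).toCircle : ℂ)

lemma continuous_divg [DecidableEq V] (src tgt : E → V) :
    Continuous fun J : E → Real.Angle => divg src tgt J := by
  refine continuous_pi fun x => ?_
  simp only [divg, ← Finset.sum_filter]
  fun_prop

lemma continuous_chr (m : E → ℤ) : Continuous (chr m) := by
  have h : Continuous fun J : E → Real.Angle => ∑ e, m e • J e := by fun_prop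
  unfold chr
  simp only [Real.Angle.coe_toCircle]
  have h1 := Real.Angle.continuous_cos.comp h
  have h2 := Real.Angle.continuous_sin.comp h
  exact (Complex.continuous_ofReal.comp h1).add
    ((Complex.continuous_ofReal.comp h2).mul continuous_const)

lemma norm_chr (m : E → ℤ) (J : E → Real.Angle) : ‖chr m J‖ = 1 := Circle.norm_coe _

lemma chr_add (m : E → ℤ) (J K : E → Real.Angle) : chr m (J + K) = chr m J * chr m K := by
  simp only [chr, Pi.add_apply, smul_add, Finset.sum_add_distrib, Real.Angle.toCircle_add,
    Circle.coe_mul]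

variable [DecidableEq V] {src tgt : E → V} {lam : Measure (E → Real.Angle)}

lemma integral_chr_eq_one (hlam : IsKerHaar src tgt lam) {m : E → ℤ}
    (hm : ∀ J : E → Real.Angle, divg src tgt J = 0 → ∑ e, m e • J e = 0) :
    ∫ J, chr m J ∂lam = 1 := by
  obtain ⟨hprob, hsupp, -⟩ := hlam
  have hmeas : MeasurableSet {J : E → Real.Angle | divg src tgt J = 0} :=
    (isClosed_singleton.preimage (continuous_divg src tgt)).measurableSet
  have hae : ∀ᵐ J ∂lam, divg src tgt J = 0 := (prob_compl_eq_zero_iff hmeas).mpr hsupp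
  have : ∫ J, chr m J ∂lam = ∫ _, (1 : ℂ) ∂lam :=
    integral_congr_ae (hae.mono fun J hJ => by simp [chr, hm J hJ])
  simp [this]

lemma integral_chr_eq_zero (hlam : IsKerHaar src tgt lam) {m : E → ℤ}
    {J₀ : E → Real.Angle} (hJ₀ : divg src tgt J₀ = 0) (hm : ∑ e, m e • J₀ e ≠ 0) :
    ∫ J, chr m J ∂lam = 0 := by
  obtain ⟨hprob, -, hinv⟩ := hlam
  have hne : chr m J₀ ≠ 1 := by
    intro h
    apply hm
    rw [← Real.Angle.arg_toCircle (∑ e, m e • J₀ e)]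
    change ((Complex.arg (chr m J₀) : ℝ) : Real.Angle) = 0
    simp [h]
  have h : ∫ J, chr m J ∂lam = chr m J₀ * ∫ J, chr m J ∂lam := by
    conv_lhs => rw [← hinv J₀ hJ₀]
    rw [integral_map (by fun_prop) (continuous_chr m).aestronglyMeasurable]
    simp only [chr_add, integral_const_mul]
  have h2 : (1 - chr m J₀) * ∫ J, chr m J ∂lam = 0 := by linear_combination h
  exact (mul_eq_zero.mp h2).resolve_left (sub_ne_zero.mpr hne.symm)

/-- The Fourier mode at `J_e + ε_e`, split over all edges into its `ε`- and `J`-dependence. -/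
lemma prod_term (p : ℤ → ℝ) (ε : E → ℝ) (m : E → ℤ) (J : E → Real.Angle) :
    ∏ e, ((p (m e) : ℂ) *
        Complex.exp (((m e * ((J e).toReal + ε e) : ℝ) : ℂ) * Complex.I))
      = Complex.exp (Complex.I * ∑ e, (m e : ℂ) * (ε e : ℂ)) * (∏ e, (p (m e) : ℂ)) * chr m J := by
  have hchr : chr m J = Complex.exp (∑ e, (m e : ℂ) * ((J e).toReal : ℂ) * Complex.I) := by
    have : ∑ e, m e • J e = ((∑ e, (m e : ℝ) * (J e).toReal : ℝ) : Real.Angle) := by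
      rw [← Real.Angle.coe_coeHom, map_sum]
      refine Finset.sum_congr rfl fun e _ => ?_
      rw [Real.Angle.coe_coeHom, ← zsmul_eq_mul, Real.Angle.coe_zsmul, Real.Angle.coe_toReal]
    rw [chr, this, Real.Angle.toCircle_coe, Circle.coe_exp]
    push_cast
    rw [Finset.sum_mul]
  rw [Finset.prod_mul_distrib, hchr, mul_right_comm, ← Complex.exp_add, ← Complex.exp_sum,
    mul_comm, Finset.mul_sum, ← Finset.sum_add_distrib]
  congr 2
  refine Finset.sum_congr rfl fun e _ => ?_
  push_cast
  ring

end Characters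

/-- The duality identity itself; the quotient formula is the quotient of two instances of it. -/
lemma duality {V E : Type*} [Fintype V] [Fintype E] [DecidableEq V]
    (src tgt : E → V) (hconn : IsConn src tgt) (bd : V) (p : ℤ → ℝ)
    (hsym : ∀ n : ℤ, p (-n) = p n) (hnonneg : ∀ n : ℤ, 0 ≤ p n)
    (hsum : Summable fun n : ℤ => (n : ℝ) ^ 2 * p n)
    (lam : Measure (E → Real.Angle)) (hlam : IsKerHaar src tgt lam) (ε : E → ℝ) :
    (∑' h : {h : V → ℤ // h bd = 0},
        Complex.exp (Complex.I * ∑ e, ((grad src tgt h.1 e : ℤ) : ℂ) * (ε e : ℂ)) *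
          ∏ e, (p (grad src tgt h.1 e) : ℂ))
      = Complex.ofReal (∫ J, ∏ e, wgt p ((J e).toReal + ε e) ∂ lam) := by
  have hp := summable_of_sq hnonneg hsum
  have := hlam.1
  let A (m : E → ℤ) : ℂ :=
    Complex.exp (Complex.I * ∑ e, (m e : ℂ) * (ε e : ℂ)) * ∏ e, (p (m e) : ℂ)
  have hA : Summable fun m => ‖A m‖ := by
    have h := summable_norm_prod (E := E) (f := fun _ n => (p n : ℂ))
      fun e => by simpa using hp.norm
    refine h.congr fun m => ?_
    have hre : Complex.I * ∑ e, (m e : ℂ) * (ε e : ℂ)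
        = ((∑ e, (m e : ℝ) * ε e : ℝ) : ℂ) * Complex.I := by
      push_cast; ring
    simp only [A, norm_mul, hre, Complex.norm_exp_ofReal_mul_I, one_mul]
  have hexp (J : E → Real.Angle) :
      ((∏ e, wgt p ((J e).toReal + ε e) : ℝ) : ℂ) = ∑' m, A m * chr m J := by
    rw [Complex.ofReal_prod]
    simp_rw [wgt_eq hsym hnonneg hp]
    rw [prod_tsum fun e => by simpa only [norm_term hnonneg] using hp]
    simp_rw [prod_term]
    rfl
  have hint (m : E → ℤ) : Integrable (fun J => A m * chr m J) lam := by
    refine Integrable.of_bound ((continuous_chr m).aestronglyMeasurable.const_mul _) ‖A m‖ ?_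
    exact Filter.Eventually.of_forall fun J => by simp [norm_chr]
  have hRHS : Complex.ofReal (∫ J, ∏ e, wgt p ((J e).toReal + ε e) ∂ lam)
      = ∑' m, A m * ∫ J, chr m J ∂lam := by
    refine integral_ofReal.symm.trans ?_
    simp only [Complex.coe_algebraMap, hexp]
    rw [← integral_tsum_of_summable_integral_norm hint]
    · simp_rw [integral_const_mul]
    · simpa [norm_chr] using hA
  rw [hRHS, ← (grad_injective hconn bd).tsum_eq]
  · refine tsum_congr fun h => ?_
    rw [integral_chr_eq_one hlam fun J hJ => grad_pairing_eq_zero h.1 hJ, mul_one]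
  · intro m hm
    by_cases hker : ∀ J : E → Real.Angle, divg src tgt J = 0 → ∑ e, m e • J e = 0
    · obtain ⟨h, h0, hh⟩ := exists_grad_eq hconn bd hker
      exact ⟨⟨h, h0⟩, hh⟩
    · push Not at hker
      obtain ⟨J₀, hJ₀, hne⟩ := hker
      exact absurd (mul_eq_zero_of_right _ (integral_chr_eq_zero hlam hJ₀ hne)) hm

end KerHaarDuality

/-- **Fourier–Pontryagin duality, spin side on divergence-free forms.**
`Σ_{h : V→ℤ, h ∂ = 0} e^{i(dh,ε)} Π_e e^{-𝒱((dh)_e)} = ∫_{ker(d*)} Π_e w(J_e + ε_e) dHaar(J)`,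
and consequently `ν_★[e^{i(dh,ε)}] = Z_⋄(ε)/Z_⋄(0)`.  Here `w` is extended `2π`-periodically
to `ℝ` and evaluated at the representative `(J e).toReal ∈ (-π,π]` of the angle `J e`. -/
theorem fourier_pontryagin_duality_diamond
    {V E : Type*} [Fintype V] [Fintype E] [DecidableEq V]
    (src tgt : E → V) (hconn : IsConn src tgt) (bd : V)
    (p : ℤ → ℝ)
    (hsym : ∀ n : ℤ, p (-n) = p n)
    (hnonneg : ∀ n : ℤ, 0 ≤ p n)
    (hsum : Summable fun n : ℤ => (n : ℝ) ^ 2 * p n)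
    (hw : ∀ α : ℝ, 0 < wgt p α)
    (lam : Measure (E → Real.Angle)) (hlam : IsKerHaar src tgt lam)
    (ε : E → ℝ) :
    (∑' h : {h : V → ℤ // h bd = 0},
        Complex.exp (Complex.I * ∑ e, ((grad src tgt h.1 e : ℤ) : ℂ) * (ε e : ℂ)) *
          ∏ e, (p (grad src tgt h.1 e) : ℂ))
      = Complex.ofReal (∫ J, ∏ e, wgt p ((J e).toReal + ε e) ∂ lam)
    ∧
    (∑' h : {h : V → ℤ // h bd = 0},
        Complex.exp (Complex.I * ∑ e, ((grad src tgt h.1 e : ℤ) : ℂ) * (ε e : ℂ)) *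
          ∏ e, (p (grad src tgt h.1 e) : ℂ)) /
      (∑' h : {h : V → ℤ // h bd = 0}, ∏ e, (p (grad src tgt h.1 e) : ℂ))
      = Complex.ofReal
          ((∫ J, ∏ e, wgt p ((J e).toReal + ε e) ∂ lam) /
            (∫ J, ∏ e, wgt p ((J e).toReal) ∂ lam)) := by
  have h := KerHaarDuality.duality src tgt hconn bd p hsym hnonneg hsum lam hlam
  refine ⟨h ε, ?_⟩
  have h0 := h 0
  simp only [Pi.zero_apply, Complex.ofReal_zero, mul_zero, Finset.sum_const_zero,
    Complex.exp_zero, one_mul, add_zero] at h0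
  rw [h ε, h0, Complex.ofReal_div]
end
end

section
/- Covariance duality (Lemma 2.4, case of ⋄-heights and ★-spins): For all ε, ω ∈ ℝ^E, ν_⋄[(𝐧,ε)(𝐧,ω)] + μ_★[(𝒰'(J),ε)(𝒰'(J),ω)] = Σ_{e∈E} μ_★[𝒰''(J_e)] ε_e ω_e, where under μ_★ we write J = dθ, and (𝒰'(J),ε) = Σ_{e∈E} 𝒰'(J_e) ε_e. -/
/-!
Expand the weight in Fourier modes, `w(α) = ∑ p(n) e^{inα}`. For any absolutely convergent
series `g_e(α) = ∑ a_e(n) e^{inα}`, multiplying out `∏ e, g_e((dθ)_e)` and summing by parts,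
`(n, dθ) = (d*n, θ)`, turns each term into a character of the torus with frequency `d*n`;
integrating over `θ` keeps exactly the divergence-free `n`, so
`∫ ∏ e, g_e((dθ)_e) dθ = (2π)^|V| ∑_{d*n = 0} ∏ e, a_e(n_e)` (`fourier_duality`).

With `g_e = w` this relates the two partition functions (`hasSum_partition`). Differentiating the
weight once at each of two edges `e₁, e₂` (twice if they coincide) puts `i² n_{e₁} n_{e₂}` on the
height side and `w'/w = -𝒰'`, `w''/w = 𝒰'² - 𝒰''` on the spin side; hence `n_{e₁} n_{e₂}` is dual
to `δ_{e₁e₂} 𝒰''(J_{e₁}) - 𝒰'(J_{e₁}) 𝒰'(J_{e₂})` (`hasSum_pair`). Contracting with `ε` and `ω`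
and dividing by the partition function gives the covariance duality.
-/

open MeasureTheory Real
noncomputable section

/-- The dual spin potential `𝒰 = -log w`. -/
def spinU (p : ℤ → ℝ) : ℝ → ℝ := fun t => -Real.log (wgt p t)

/-- Coordinates for the torus `(ℝ/2πℤ)^V`: the product over `V` of Lebesgue measure on the
fundamental domain `(-π, π]`. -/
def torusBox (V : Type*) [Fintype V] : Measure (V → ℝ) :=
  Measure.pi fun _ => volume.restrict (Set.Ioc (-π) π)

/-- Expectation with respect to the ⋄-height measure
`ν_⋄(n) ∝ exp(-Σ_e 𝒱(n_e))` on `{n ∈ ℤ^E : d* n = 0}`, with `p = e^{-𝒱}`. -/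
def diamExp {V E : Type*} [Fintype E] [DecidableEq V] (src tgt : E → V)
    (p : ℤ → ℝ) (F : (E → ℤ) → ℝ) : ℝ :=
  (∑' n : {n : E → ℤ // divg src tgt n = 0}, F n.1 * ∏ e, p (n.1 e)) /
    ∑' n : {n : E → ℤ // divg src tgt n = 0}, ∏ e, p (n.1 e)

/-- Expectation with respect to the ★-spin measure `μ_★(dθ) ∝ Π_e w((dθ)_e) dθ`
on the torus `(ℝ/2πℤ)^V` (in the coordinates of `torusBox`; the normalising constants cancel
in the ratio). -/
def starSpinExp {V E : Type*} [Fintype V] [Fintype E] (src tgt : E → V)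
    (p : ℤ → ℝ) (F : (V → ℝ) → ℝ) : ℝ :=
  (∫ θ, F θ * ∏ e, wgt p (grad src tgt θ e) ∂ torusBox V) /
    ∫ θ, ∏ e, wgt p (grad src tgt θ e) ∂ torusBox V

/-! ### Fourier series of the spin weight and its derivatives -/

section Series

/-- The Fourier coefficients `(i n)^k p(n)` of the `k`-th derivative of the weight. -/
def coef (p : ℤ → ℝ) (k : ℕ) (n : ℤ) : ℂ := (n * Complex.I) ^ k * p n

/-- The Fourier mode `e^{inα}`. -/
def mode (n : ℤ) (α : ℝ) : ℂ := Complex.exp (((n * α : ℝ) : ℂ) * Complex.I)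

/-- The termwise `k`-th derivative of `α ↦ ∑ p(n) e^{inα}`; it is used for `k ≤ 2`, where it
converges absolutely and is the true derivative. -/
def wgtC (p : ℤ → ℝ) (k : ℕ) (α : ℝ) : ℂ := ∑' n : ℤ, coef p k n * mode n α

lemma norm_mode (n : ℤ) (α : ℝ) : ‖mode n α‖ = 1 := Complex.norm_exp_ofReal_mul_I _

lemma continuous_mode (n : ℤ) : Continuous (mode n) := by
  unfold mode; fun_prop

/-- The second-moment hypothesis controls the coefficients of up to two derivatives; for `k = 0`
the term `n = 0` is not dominated by `n² p(n)` and is added separately. -/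
lemma summable_coef {p : ℤ → ℝ} (hnonneg : ∀ n : ℤ, 0 ≤ p n)
    (hsum : Summable fun n : ℤ => (n : ℝ) ^ 2 * p n) {k : ℕ} (hk : k ≤ 2) :
    Summable fun n => ‖coef p k n‖ := by
  have h0 : Summable fun n : ℤ => (n : ℝ) ^ 2 * p n + (if n = 0 then p 0 else 0) :=
    hsum.add (summable_of_ne_finset_zero (s := {0}) (by intro b hb; simp at hb; simp [hb]))
  refine Summable.of_nonneg_of_le (fun _ => norm_nonneg _) (fun n => ?_) h0
  have hn : ‖coef p k n‖ = |(n : ℝ)| ^ k * p n := by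
    simp [coef, abs_of_nonneg (hnonneg n)]
  rw [hn]
  by_cases h : n = 0
  · subst h
    rcases Nat.eq_zero_or_pos k with rfl | hk'
    · simp
    · simp [hk'.ne', hnonneg 0]
  · have h1 : (1 : ℝ) ≤ |(n : ℝ)| := by
      exact_mod_cast Int.one_le_abs h
    have : |(n : ℝ)| ^ k ≤ |(n : ℝ)| ^ 2 := pow_le_pow_right₀ h1 hk
    rw [sq_abs] at this
    simp only [h, if_false, add_zero]
    exact mul_le_mul_of_nonneg_right this (hnonneg n)

lemma summable_term {p : ℤ → ℝ} {k : ℕ} (h : Summable fun n => ‖coef p k n‖) (α : ℝ) :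
    Summable fun n => coef p k n * mode n α :=
  Summable.of_norm (by simpa [norm_mode] using h)

lemma hasDerivAt_wgtC {p : ℤ → ℝ} {k : ℕ} (h : Summable fun n => ‖coef p k n‖)
    (h' : Summable fun n => ‖coef p (k + 1) n‖) (α : ℝ) :
    HasDerivAt (wgtC p k) (wgtC p (k + 1) α) α := by
  refine hasDerivAt_tsum (𝕜 := ℝ) (F := ℂ) (y₀ := (0 : ℝ))
    (g := fun n α => coef p k n * mode n α) (g' := fun n α => coef p (k + 1) n * mode n α)
    h' (fun n y => ?_) (fun n y => ?_) (summable_term h 0) α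
  · have h1 : HasDerivAt (fun y : ℝ => (((n * y : ℝ) : ℂ) * Complex.I)) (n * Complex.I) y := by
      have := ((hasDerivAt_id y).const_mul (n : ℝ)).ofReal_comp.mul_const Complex.I
      simpa using this
    have h2 := h1.cexp.const_mul (coef p k n)
    refine h2.congr_deriv ?_
    simp only [coef, mode]; ring
  · simp [norm_mode]

lemma continuous_wgtC {p : ℤ → ℝ} {k : ℕ} (h : Summable fun n => ‖coef p k n‖) :
    Continuous (wgtC p k) :=
  continuous_tsum (fun n => continuous_const.mul (continuous_mode n)) h
    (fun n x => by simp [norm_mode])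

/-- Symmetry of `p` makes the complex series real-valued. -/
lemma wgtC_real {p : ℤ → ℝ} (hsym : ∀ n : ℤ, p (-n) = p n) (k : ℕ) (α : ℝ) :
    (((wgtC p k α).re : ℝ) : ℂ) = wgtC p k α := by
  rw [← Complex.conj_eq_iff_re]
  unfold wgtC
  rw [Complex.conj_tsum, ← (Equiv.neg ℤ).tsum_eq]
  refine tsum_congr fun n => ?_
  simp [coef, mode, hsym, ← Complex.exp_conj]

lemma wgt_eq {p : ℤ → ℝ} (h : Summable fun n => ‖coef p 0 n‖) (α : ℝ) :
    wgt p α = (wgtC p 0 α).re := by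
  unfold wgt wgtC
  rw [Complex.re_tsum (summable_term h α)]
  refine tsum_congr fun n => ?_
  simp only [coef, mode, pow_zero, one_mul, Complex.re_ofReal_mul, Complex.exp_ofReal_mul_I_re]

end Series

/-! ### Products of absolutely convergent series -/

section Product

variable {E : Type*} [Fintype E]

lemma pi_count : (Measure.pi fun _ : E => (Measure.count : Measure ℤ)) = Measure.count := by
  refine Measure.ext_of_singleton fun n => ?_
  rw [Measure.pi_singleton]
  simp

/-- A sum over `E → ℤ` is an integral against the product of counting measures, so Fubini's theorem
gives this and `tsum_prod_eq`. -/
lemma summable_norm_prod {a : E → ℤ → ℂ} (ha : ∀ e, Summable fun n => ‖a e n‖) :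
    Summable fun n : E → ℤ => ‖∏ e, a e (n e)‖ := by
  have h : Integrable (fun n : E → ℤ => ∏ e, a e (n e))
      (Measure.pi fun _ : E => (Measure.count : Measure ℤ)) :=
    Integrable.fintype_prod_dep fun e => by
      rw [integrable_count_iff]; exact ha e
  rw [pi_count, integrable_count_iff] at h
  exact h

lemma tsum_prod_eq {a : E → ℤ → ℂ} (ha : ∀ e, Summable fun n => ‖a e n‖) :
    ∑' n : E → ℤ, ∏ e, a e (n e) = ∏ e, ∑' n, a e n := by
  have h := integral_fintype_prod_eq_prod (𝕜 := ℂ) (fun e => a e)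
    (μ := fun _ : E => (Measure.count : Measure ℤ))
  have h2 := summable_norm_prod ha
  rw [pi_count, integral_countable (by rw [integrable_count_iff]; exact h2)] at h
  simp only [count_real_singleton, one_smul] at h
  rw [h]
  refine Finset.prod_congr rfl fun e _ => ?_
  rw [integral_countable (by rw [integrable_count_iff]; exact ha e)]
  simp

end Product

/-! ### Fourier duality on the torus -/

section Torus

variable {V E : Type*} [Fintype V]

instance : IsFiniteMeasure (torusBox V) := by
  unfold torusBox; infer_instance

/-- Orthogonality of the Fourier modes on one circle. -/
lemma integral_mode (m : ℤ) :
    ∫ t in Set.Ioc (-π) π, mode m t = if m = 0 then 2 * π else 0 := by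
  rw [← intervalIntegral.integral_of_le (by linarith [pi_pos])]
  split_ifs with h
  · subst h; simp [mode]; ring
  · have hc : (m : ℂ) * Complex.I ≠ 0 := by simp [h]
    have h1 : ∀ t : ℝ, mode m t = Complex.exp ((m * Complex.I) * t) := fun t => by
      unfold mode; congr 1; push_cast; ring
    simp_rw [h1]
    rw [integral_exp_mul_complex hc]
    have : Complex.exp ((m : ℂ) * Complex.I * (π : ℝ))
        = Complex.exp ((m : ℂ) * Complex.I * ((-π : ℝ) : ℂ)) := by
      rw [Complex.exp_eq_exp_iff_exists_int]
      exact ⟨m, by push_cast; ring⟩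
    rw [this]; simp

lemma integral_prod_mode (m : V → ℤ) :
    ∫ θ, ∏ x, mode (m x) (θ x) ∂torusBox V
      = if m = 0 then (((2 * π) ^ Fintype.card V : ℝ) : ℂ) else 0 := by
  unfold torusBox
  rw [integral_fintype_prod_eq_prod]
  simp_rw [integral_mode]
  split_ifs with h
  · subst h; simp
  · obtain ⟨x, hx⟩ := Function.ne_iff.mp h
    exact Finset.prod_eq_zero (Finset.mem_univ x) (by simpa using hx)

variable [Fintype E] [DecidableEq V]

/-- Summation by parts: `(n, dθ) = (d*n, θ)`, exponentiated. -/
lemma prod_mode_grad (src tgt : E → V) (n : E → ℤ) (θ : V → ℝ) :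
    ∏ e, mode (n e) (grad src tgt θ e) = ∏ x, mode (divg src tgt n x) (θ x) := by
  unfold mode
  rw [← Complex.exp_sum, ← Complex.exp_sum, ← Finset.sum_mul, ← Finset.sum_mul,
    ← Complex.ofReal_sum, ← Complex.ofReal_sum]
  congr 3
  simp only [grad, divg, Int.cast_sub, Int.cast_sum, sub_mul, mul_sub, Finset.sum_sub_distrib,
    Finset.sum_mul]
  congr 1 <;>
  · rw [Finset.sum_comm]
    refine Finset.sum_congr rfl fun e _ => ?_
    simp

/-- The Fourier duality: integrating out the spins keeps only divergence-free currents. -/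
lemma fourier_duality (src tgt : E → V) (p : ℤ → ℝ) (k : E → ℕ)
    (hk : ∀ e, Summable fun n => ‖coef p (k e) n‖) :
    HasSum (fun n : {n : E → ℤ // divg src tgt n = 0} =>
        (((2 * π) ^ Fintype.card V : ℝ) : ℂ) * ∏ e, coef p (k e) (n.1 e))
      (∫ θ, ∏ e, wgtC p (k e) (grad src tgt θ e) ∂torusBox V) := by
  have hS := summable_norm_prod hk
  have hcont : ∀ n : E → ℤ, Continuous fun θ : V → ℝ => ∏ e, mode (n e) (grad src tgt θ e) :=
    fun n => continuous_finsetProd _ fun e _ =>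
      (continuous_mode _).comp (by unfold grad; fun_prop)
  have hnorm : ∀ (n : E → ℤ) (θ : V → ℝ), ‖∏ e, mode (n e) (grad src tgt θ e)‖ = 1 := by
    intro n θ; simp [norm_prod, norm_mode]
  have hint : ∀ n : E → ℤ, Integrable (fun θ : V → ℝ =>
      (∏ e, coef p (k e) (n e)) * ∏ e, mode (n e) (grad src tgt θ e)) (torusBox V) :=
    fun n => (Integrable.of_bound (hcont n).aestronglyMeasurable 1
      (Filter.Eventually.of_forall fun θ => (hnorm n θ).le)).const_mul _
  have key := hasSum_integral_of_summable_integral_norm hint (by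
    simp_rw [norm_mul, hnorm]
    simpa using hS.mul_left ((torusBox V).real Set.univ))
  have hL : ∀ n : E → ℤ, ∫ θ, (∏ e, coef p (k e) (n e)) * ∏ e, mode (n e) (grad src tgt θ e)
        ∂torusBox V
      = Set.indicator {n : E → ℤ | divg src tgt n = 0}
        (fun n => (((2 * π) ^ Fintype.card V : ℝ) : ℂ) * ∏ e, coef p (k e) (n e)) n := by
    intro n
    simp_rw [prod_mode_grad]
    rw [integral_const_mul, integral_prod_mode, Set.indicator_apply]
    simp only [Set.mem_ofPred_eq]
    split_ifs <;> ring
  have hR : ∀ θ : V → ℝ, ∑' n : E → ℤ,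
      (∏ e, coef p (k e) (n e)) * ∏ e, mode (n e) (grad src tgt θ e)
      = ∏ e, wgtC p (k e) (grad src tgt θ e) := by
    intro θ
    simp_rw [← Finset.prod_mul_distrib]
    exact tsum_prod_eq (a := fun e n => coef p (k e) n * mode n (grad src tgt θ e))
      (fun e => by simpa [norm_mode] using hk e)
  simp_rw [hL, hR] at key
  exact hasSum_subtype_iff_indicator.mpr key

end Torus

/-! ### Derivatives of the spin potential -/

section Derivatives

lemma hasDerivAt_re_wgtC {p : ℤ → ℝ} {k : ℕ} (h : Summable fun n => ‖coef p k n‖)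
    (h' : Summable fun n => ‖coef p (k + 1) n‖) (α : ℝ) :
    HasDerivAt (fun α => (wgtC p k α).re) (wgtC p (k + 1) α).re α :=
  (Complex.reCLM.hasFDerivAt.comp_hasDerivAt α (hasDerivAt_wgtC h h' α))

variable {p : ℤ → ℝ}

lemma deriv_spinU (hc : ∀ k ≤ 2, Summable fun n => ‖coef p k n‖)
    (hw : ∀ α : ℝ, 0 < wgt p α) (α : ℝ) :
    deriv (spinU p) α = -((wgtC p 1 α).re / wgt p α) := by
  have hfun : wgt p = fun α => (wgtC p 0 α).re := funext (wgt_eq (hc 0 (by norm_num)))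
  have h1 : HasDerivAt (wgt p) (wgtC p 1 α).re α := by
    rw [hfun]; exact hasDerivAt_re_wgtC (hc 0 (by norm_num)) (hc 1 (by norm_num)) α
  exact (h1.log (hw α).ne').neg.deriv

lemma deriv_deriv_spinU (hc : ∀ k ≤ 2, Summable fun n => ‖coef p k n‖)
    (hw : ∀ α : ℝ, 0 < wgt p α) (α : ℝ) :
    deriv (deriv (spinU p)) α
      = (deriv (spinU p) α) ^ 2 - (wgtC p 2 α).re / wgt p α := by
  have hfun : wgt p = fun α => (wgtC p 0 α).re := funext (wgt_eq (hc 0 (by norm_num)))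
  have h1 : HasDerivAt (wgt p) (wgtC p 1 α).re α := by
    rw [hfun]; exact hasDerivAt_re_wgtC (hc 0 (by norm_num)) (hc 1 (by norm_num)) α
  have h2 := hasDerivAt_re_wgtC (hc 1 (by norm_num)) (hc 2 le_rfl) α
  have h3 := (h2.div h1 (hw α).ne').neg.deriv
  have h4 : deriv (spinU p) = -((fun α => (wgtC p 1 α).re) / wgt p) :=
    funext fun x => deriv_spinU hc hw x
  rw [h4, h3]
  have := (hw α).ne'
  simp only [Pi.neg_apply, Pi.div_apply]
  field_simp
  ring

lemma continuous_wgt (hc : ∀ k ≤ 2, Summable fun n => ‖coef p k n‖) : Continuous (wgt p) := by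
  have hfun : wgt p = fun α => (wgtC p 0 α).re := funext (wgt_eq (hc 0 (by norm_num)))
  rw [hfun]
  exact Complex.continuous_re.comp (continuous_wgtC (hc 0 (by norm_num)))

lemma continuous_deriv_spinU (hc : ∀ k ≤ 2, Summable fun n => ‖coef p k n‖)
    (hw : ∀ α : ℝ, 0 < wgt p α) : Continuous (deriv (spinU p)) := by
  rw [funext (deriv_spinU hc hw)]
  exact ((Complex.continuous_re.comp (continuous_wgtC (hc 1 (by norm_num)))).div
    (continuous_wgt hc) fun α => (hw α).ne').neg

lemma continuous_deriv_deriv_spinU (hc : ∀ k ≤ 2, Summable fun n => ‖coef p k n‖)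
    (hw : ∀ α : ℝ, 0 < wgt p α) : Continuous (deriv (deriv (spinU p))) := by
  rw [funext (deriv_deriv_spinU hc hw)]
  exact ((continuous_deriv_spinU hc hw).pow 2).sub
    ((Complex.continuous_re.comp (continuous_wgtC (hc 2 le_rfl))).div
    (continuous_wgt hc) fun α => (hw α).ne')

end Derivatives

/-! ### The duality for a pair of edges -/

section Covariance

/-- The number of times the edge `e` occurs among `e₁, e₂`: the order of the derivative of the
weight taken at `e`. -/
def mult {E : Type*} [DecidableEq E] (e₁ e₂ e : E) : ℕ :=
  (if e = e₁ then 1 else 0) + (if e = e₂ then 1 else 0)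

lemma mult_le {E : Type*} [DecidableEq E] (e₁ e₂ e : E) : mult e₁ e₂ e ≤ 2 := by
  unfold mult; split_ifs <;> simp

/-- Only the factors at `e₁, e₂` survive in a product whose zeroth-order factors are `1`; it is
applied to `r k e = w⁽ᵏ⁾(J_e) / w(J_e)`. -/
lemma prod_apply_mult {E : Type*} [Fintype E] [DecidableEq E] (r : ℕ → E → ℝ)
    (hr : ∀ e, r 0 e = 1) (e₁ e₂ : E) :
    ∏ e, r (mult e₁ e₂ e) e = if e₁ = e₂ then r 2 e₁ else r 1 e₁ * r 1 e₂ := by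
  split_ifs with h
  · subst h
    rw [Finset.prod_eq_single e₁ (fun e _ he => by simp [mult, he, hr]) (by simp)]
    simp [mult]
  · rw [Finset.prod_eq_mul e₁ e₂ h (fun e _ he => by simp [mult, he.1, he.2, hr])
      (by simp) (by simp)]
    simp [mult, h, Ne.symm h]

/-- The sign comes from `i² = -1`, also when `e₁ = e₂`. -/
lemma prod_coef_mult {E : Type*} [Fintype E] [DecidableEq E] (p : ℤ → ℝ) (e₁ e₂ : E)
    (n : E → ℤ) :
    ∏ e, coef p (mult e₁ e₂ e) (n e)
      = ((-((n e₁ : ℝ) * n e₂ * ∏ e, p (n e)) : ℝ) : ℂ) := by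
  simp only [coef, Finset.prod_mul_distrib, mult, pow_add, pow_ite, pow_one, pow_zero,
    Finset.prod_ite_eq', Finset.mem_univ, if_true]
  push_cast
  linear_combination (n e₁ * n e₂ * ∏ e, (p (n e) : ℂ)) * Complex.I_sq

variable {V E : Type*} [Fintype V]

lemma integrable_of_continuous_grad (src tgt : E → V) {f : (E → ℝ) → ℝ} (hf : Continuous f) :
    Integrable (fun θ : V → ℝ => f (grad src tgt θ)) (torusBox V) := by
  have hg : Continuous fun θ : V → ℝ => f (grad src tgt θ) :=
    hf.comp (by unfold grad; fun_prop)
  have hrw : torusBox V = volume.restrict (Set.univ.pi fun _ : V => Set.Ioc (-π) π) := by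
    unfold torusBox
    rw [volume_pi, Measure.restrict_pi_pi]
  rw [hrw]
  exact (hg.continuousOn.integrableOn_compact
    (isCompact_univ_pi fun _ : V => isCompact_Icc (a := -π) (b := π))).mono_set
    (Set.pi_mono fun _ _ => Set.Ioc_subset_Icc_self)

variable [Fintype E] [DecidableEq V]

/-- The duality for one pair of edges, before normalisation, from Fourier duality with
`mult e₁ e₂ e` derivatives at each edge `e`:
`n_{e₁} n_{e₂}` corresponds to `δ_{e₁e₂} 𝒰'' - 𝒰' 𝒰'`. -/
lemma hasSum_pair [DecidableEq E] (src tgt : E → V) {p : ℤ → ℝ}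
    (hsym : ∀ n : ℤ, p (-n) = p n)
    (hc : ∀ k ≤ 2, Summable fun n => ‖coef p k n‖)
    (hw : ∀ α : ℝ, 0 < wgt p α) (e₁ e₂ : E) :
    HasSum (fun n : {n : E → ℤ // divg src tgt n = 0} =>
        (2 * π) ^ Fintype.card V * ((n.1 e₁ : ℝ) * n.1 e₂ * ∏ e, p (n.1 e)))
      (∫ θ, ((if e₁ = e₂ then deriv (deriv (spinU p)) (grad src tgt θ e₁) else 0)
          - deriv (spinU p) (grad src tgt θ e₁) * deriv (spinU p) (grad src tgt θ e₂))
        * ∏ e, wgt p (grad src tgt θ e) ∂torusBox V) := by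
  have key := fourier_duality src tgt p (mult e₁ e₂) (fun e => hc _ (mult_le e₁ e₂ e))
  have hprod : ∀ θ : V → ℝ, ∏ e, wgtC p (mult e₁ e₂ e) (grad src tgt θ e)
      = ((-(((if e₁ = e₂ then deriv (deriv (spinU p)) (grad src tgt θ e₁) else 0)
          - deriv (spinU p) (grad src tgt θ e₁) * deriv (spinU p) (grad src tgt θ e₂))
        * ∏ e, wgt p (grad src tgt θ e)) : ℝ) : ℂ) := by
    intro θ
    rw [Finset.prod_congr rfl fun e _ => (wgtC_real hsym (mult e₁ e₂ e) (grad src tgt θ e)).symm]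
    rw [← Complex.ofReal_prod]
    congr 1
    have hr := prod_apply_mult
      (fun k e => (wgtC p k (grad src tgt θ e)).re / wgt p (grad src tgt θ e))
      (fun e => by
        rw [← wgt_eq (hc 0 (by norm_num))]; exact div_self (hw _).ne') e₁ e₂
    have hsplit : ∏ e, (wgtC p (mult e₁ e₂ e) (grad src tgt θ e)).re
        = (∏ e, (wgtC p (mult e₁ e₂ e) (grad src tgt θ e)).re / wgt p (grad src tgt θ e))
          * ∏ e, wgt p (grad src tgt θ e) := by
      rw [← Finset.prod_mul_distrib]
      exact Finset.prod_congr rfl fun e _ => (div_mul_cancel₀ _ (hw _).ne').symm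
    -- `w'/w = -𝒰'` and `w''/w = 𝒰'² - 𝒰''`.
    rw [hsplit, hr, ← neg_mul]
    congr 1
    split_ifs with h
    · subst h
      rw [deriv_deriv_spinU hc hw]; ring
    · rw [deriv_spinU hc hw, deriv_spinU hc hw]; ring
  simp_rw [hprod, prod_coef_mult, ← Complex.ofReal_mul] at key
  rw [integral_complex_ofReal, Complex.hasSum_ofReal, integral_neg] at key
  simpa using key.neg

/-- Partition functions agree up to the volume of the torus. -/
lemma hasSum_partition (src tgt : E → V) {p : ℤ → ℝ}
    (hsym : ∀ n : ℤ, p (-n) = p n)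
    (hc : ∀ k ≤ 2, Summable fun n => ‖coef p k n‖) :
    HasSum (fun n : {n : E → ℤ // divg src tgt n = 0} =>
        (2 * π) ^ Fintype.card V * ∏ e, p (n.1 e))
      (∫ θ, ∏ e, wgt p (grad src tgt θ e) ∂torusBox V) := by
  have h0 := hc 0 (by norm_num)
  have key := fourier_duality src tgt p (fun _ => 0) (fun e => h0)
  have hW : ∀ α, wgtC p 0 α = (wgt p α : ℂ) := fun α => by
    rw [wgt_eq h0, wgtC_real hsym]
  simp_rw [hW] at key
  simp only [coef, pow_zero, one_mul, ← Complex.ofReal_prod, ← Complex.ofReal_mul] at key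
  rwa [integral_complex_ofReal, Complex.hasSum_ofReal] at key

end Covariance

/-- **Covariance duality (⋄-heights and ★-spins).**
`ν_⋄[(n,ε)(n,ω)] + μ_★[(𝒰'(J),ε)(𝒰'(J),ω)] = Σ_e μ_★[𝒰''(J_e)] ε_e ω_e`, where `J = dθ`. -/
theorem covariance_duality_diamond_heights_star_spins
    {V E : Type*} [Fintype V] [Fintype E] [DecidableEq V]
    (src tgt : E → V)
    (p : ℤ → ℝ)
    (hsym : ∀ n : ℤ, p (-n) = p n)
    (hnonneg : ∀ n : ℤ, 0 ≤ p n)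
    (hsum : Summable fun n : ℤ => (n : ℝ) ^ 2 * p n)
    (hw : ∀ α : ℝ, 0 < wgt p α)
    (ε ω : E → ℝ) :
    diamExp src tgt p
        (fun n => (∑ e, (n e : ℝ) * ε e) * (∑ e, (n e : ℝ) * ω e))
      + starSpinExp src tgt p
          (fun θ => (∑ e, deriv (spinU p) (grad src tgt θ e) * ε e) *
            (∑ e, deriv (spinU p) (grad src tgt θ e) * ω e))
      = ∑ e, starSpinExp src tgt p
          (fun θ => deriv (deriv (spinU p)) (grad src tgt θ e)) * (ε e * ω e) := by
  classical
  have hc : ∀ k ≤ 2, Summable fun n => ‖coef p k n‖ :=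
    fun k hk => summable_coef hnonneg hsum hk
  set c : ℝ := (2 * π) ^ Fintype.card V with hcdef
  have hc0 : c ≠ 0 := by positivity
  set Z : ℝ := ∫ θ, ∏ e, wgt p (grad src tgt θ e) ∂torusBox V with hZ
  have hcw := continuous_wgt hc
  have hcU := continuous_deriv_spinU hc hw
  have hcU2 := continuous_deriv_deriv_spinU hc hw
  -- Numerator of the height expectation, as a double sum over edges.
  have hA : HasSum (fun n : {n : E → ℤ // divg src tgt n = 0} =>
      c * (((∑ e, (n.1 e : ℝ) * ε e) * (∑ e, (n.1 e : ℝ) * ω e)) * ∏ e, p (n.1 e)))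
      (∑ e₁, ∑ e₂, ε e₁ * ω e₂ *
        ∫ θ, ((if e₁ = e₂ then deriv (deriv (spinU p)) (grad src tgt θ e₁) else 0)
          - deriv (spinU p) (grad src tgt θ e₁) * deriv (spinU p) (grad src tgt θ e₂))
        * ∏ e, wgt p (grad src tgt θ e) ∂torusBox V) := by
    have h := hasSum_sum (s := Finset.univ) fun e₁ _ => hasSum_sum (s := Finset.univ)
      fun e₂ _ => (hasSum_pair src tgt hsym hc hw e₁ e₂).mul_left (ε e₁ * ω e₂)
    refine h.congr_fun fun n => ?_
    rw [Finset.sum_mul_sum, Finset.sum_mul, Finset.mul_sum]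
    refine Finset.sum_congr rfl fun e₁ _ => ?_
    rw [Finset.sum_mul, Finset.mul_sum]
    exact Finset.sum_congr rfl fun e₂ _ => by ring
  have hdiam : diamExp src tgt p
      (fun n => (∑ e, (n e : ℝ) * ε e) * (∑ e, (n e : ℝ) * ω e))
      = (∑ e₁, ∑ e₂, ε e₁ * ω e₂ *
        ∫ θ, ((if e₁ = e₂ then deriv (deriv (spinU p)) (grad src tgt θ e₁) else 0)
          - deriv (spinU p) (grad src tgt θ e₁) * deriv (spinU p) (grad src tgt θ e₂))
        * ∏ e, wgt p (grad src tgt θ e) ∂torusBox V) / Z := by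
    rw [← hA.tsum_eq, hZ, ← (hasSum_partition src tgt hsym hc).tsum_eq, tsum_mul_left,
      tsum_mul_left, mul_div_mul_left _ _ hc0]
    rfl
  have hI : ∀ e₁ e₂ : E, Integrable (fun θ : V → ℝ =>
      deriv (spinU p) (grad src tgt θ e₁) * deriv (spinU p) (grad src tgt θ e₂)
        * ∏ e, wgt p (grad src tgt θ e)) (torusBox V) := fun e₁ e₂ =>
    integrable_of_continuous_grad src tgt
      (f := fun J => deriv (spinU p) (J e₁) * deriv (spinU p) (J e₂) * ∏ e, wgt p (J e))
      (by fun_prop)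
  have hI2 : ∀ e₁ : E, Integrable (fun θ : V → ℝ =>
      deriv (deriv (spinU p)) (grad src tgt θ e₁)
        * ∏ e, wgt p (grad src tgt θ e)) (torusBox V) := fun e₁ =>
    integrable_of_continuous_grad src tgt
      (f := fun J => deriv (deriv (spinU p)) (J e₁) * ∏ e, wgt p (J e))
      (by fun_prop)
  -- The spin covariance, expanded over the same pairs of edges.
  have hB : ∫ θ, ((∑ e, deriv (spinU p) (grad src tgt θ e) * ε e) *
        (∑ e, deriv (spinU p) (grad src tgt θ e) * ω e))
        * ∏ e, wgt p (grad src tgt θ e) ∂torusBox V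
      = ∑ e₁, ∑ e₂, ε e₁ * ω e₂ * ∫ θ,
        deriv (spinU p) (grad src tgt θ e₁) * deriv (spinU p) (grad src tgt θ e₂)
        * ∏ e, wgt p (grad src tgt θ e) ∂torusBox V := by
    simp_rw [← integral_const_mul]
    simp_rw [← integral_finsetSum Finset.univ (fun e₂ _ => (hI _ e₂).const_mul _)]
    rw [← integral_finsetSum Finset.univ (fun e₁ _ =>
      integrable_finsetSum Finset.univ (fun e₂ _ => (hI e₁ e₂).const_mul _))]
    congr 1
    funext θ
    rw [Finset.sum_mul_sum, Finset.sum_mul]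
    refine Finset.sum_congr rfl fun e₁ _ => ?_
    rw [Finset.sum_mul]
    exact Finset.sum_congr rfl fun e₂ _ => by ring
  have hAB : ∀ e₁ e₂ : E,
      ∫ θ, ((if e₁ = e₂ then deriv (deriv (spinU p)) (grad src tgt θ e₁) else 0)
          - deriv (spinU p) (grad src tgt θ e₁) * deriv (spinU p) (grad src tgt θ e₂))
        * ∏ e, wgt p (grad src tgt θ e) ∂torusBox V
      = (if e₁ = e₂ then ∫ θ, deriv (deriv (spinU p)) (grad src tgt θ e₁)
          * ∏ e, wgt p (grad src tgt θ e) ∂torusBox V else 0)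
        - ∫ θ, deriv (spinU p) (grad src tgt θ e₁) * deriv (spinU p) (grad src tgt θ e₂)
          * ∏ e, wgt p (grad src tgt θ e) ∂torusBox V := by
    intro e₁ e₂
    split_ifs with h
    · simp_rw [sub_mul]
      exact integral_sub (hI2 e₁) (hI e₁ e₂)
    · simp_rw [zero_sub, neg_mul]
      exact integral_neg _
  -- The products of first derivatives cancel, leaving the diagonal second-derivative terms.
  rw [hdiam]
  unfold starSpinExp
  rw [hB, ← add_div, ← Finset.sum_add_distrib]
  simp_rw [← Finset.sum_add_distrib, hAB, mul_sub, sub_add_cancel, mul_ite, mul_zero,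
    Finset.sum_ite_eq, Finset.mem_univ, if_true, Finset.sum_div]
  exact Finset.sum_congr rfl fun e _ => by ring
end
end

section
/- Monotonicity of the variance of the height function in the inverse temperature (Theorem 5.1): In the edge-dependent setup below, for every pair of vertices x, y ∈ V and every edge e ∈ E, the function β_e ↦ ν_{β,★}[(h_x − h_y)²] is nondecreasing on [0,∞) (all other parameters β_f, f ≠ e, being held fixed). -/
/-!
The variance is monotone because of a positivity property of pairs of edge weights.

Write `w_β = e^{-𝒱_β}` for the Fourier coefficients of `e^{-β𝒰}`, and let `β ≤ β'`. Substituting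
`(u - v, u + v)` for the two angles gives
`w_{β'}(n) w_β(n') ∝ ∬ e^{-β'𝒰(u - v) - β𝒰(u + v)} e^{-i(n + n')u} e^{i(n - n')v} du dv`.
With `P = -𝒰`, the exponent `(β' - β) P(u - v) + β (P(u - v) + P(u + v))` is a positive
semidefinite kernel in `(u, v)`, and so is its exponential by the Schur product theorem. Hence the
product of weights is a positive semidefinite kernel in `(s, d) = (n + n', n - n')`, for `s` and
`d` in one parity class: this is `isPSD_dualWgt`. The change of variables is carried out on the
discrete circles `ZMod N` with `N` odd, where it is a bijection; then `N → ∞`.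

Now take independent `h ~ ν_{β'}` and `h' ~ ν_β`, and set `s = h + h'`, `d = h - h'`. Since
`(h_x - h_y)² - (h'_x - h'_y)² = (s_x - s_y)(d_x - d_y)`, the difference of the two variances is,
up to normalisation, a sum over parity classes of quadratic forms of a product of such kernels over
the edges, so it is nonnegative: this is `pair_tsum_nonneg`.

Convergence of all the sums needs `∑ n, (1 + n²) w_β(n) < ∞` (`summable_dualWgt`). It holds because
`n² w_β(n)` is, up to a constant, a Fourier coefficient of the continuous function
`-(e^{-β𝒰})''`, and nonnegative Fourier coefficients of a continuous function are summable. On a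
connected graph this bounds the second moments of the height differences. On a disconnected graph
both partition functions diverge (`not_summable_wt`), and both quotients are `0` by convention.
-/

open MeasureTheory Real
noncomputable section

/-- A (2π-periodic, i.e. circle) function is positive definite if all matrices
`(F(t_i - t_j))_{ij}` are positive semidefinite. -/
def PosDefFn (F : ℝ → ℝ) : Prop :=
  ∀ (n : ℕ) (t ξ : Fin n → ℝ), 0 ≤ ∑ i, ∑ j, ξ i * ξ j * F (t i - t j)

/-- The dual height-function weight `e^{-𝒱_{β}(n)} = (1/2π)∫_{-π}^{π} e^{-β𝒰(t)} e^{-int} dt`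
(real cosine form, valid since `𝒰` is even). -/
def dualWgt (U : ℝ → ℝ) (β : ℝ) (n : ℤ) : ℝ :=
  (1 / (2 * π)) * ∫ t in Set.Ioc (-π) π, Real.exp (-β * U t) * Real.cos (n * t)

open Filter Topology

/-! ### Positive semidefinite kernels -/

/-- A real kernel on an arbitrary index type is positive semidefinite: symmetric, with nonnegative
quadratic form on every finite set of indices. -/
def IsPSD {ι : Type*} (K : ι → ι → ℝ) : Prop :=
  (∀ i j, K i j = K j i) ∧
    ∀ (s : Finset ι) (ξ : ι → ℝ), 0 ≤ ∑ i ∈ s, ∑ j ∈ s, ξ i * ξ j * K i j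

namespace IsPSD

variable {ι κ : Type*} {K L : ι → ι → ℝ}

lemma iff_posSemidef : IsPSD K ↔ (Matrix.of K).PosSemidef := by
  constructor
  · rintro ⟨h1, h2⟩
    refine ⟨?_, fun ξ => ?_⟩
    · ext i j
      simp [h1 i j]
    · have := h2 ξ.support ξ
      simp only [Finsupp.sum, star_trivial, Matrix.of_apply]
      refine this.trans_eq (Finset.sum_congr rfl fun i _ => Finset.sum_congr rfl fun j _ => ?_)
      ring
  · rintro ⟨h1, h2⟩
    refine ⟨fun i j => ?_, fun s ξ => ?_⟩
    · have := congrFun (congrFun h1 i) j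
      simpa using this.symm
    · classical
      have := h2 (Finsupp.onFinset s (fun i => if i ∈ s then ξ i else 0) (by simp; tauto))
      have hs : (Finsupp.onFinset s (fun i => if i ∈ s then ξ i else 0)
          (by simp; tauto)).support ⊆ s := Finsupp.support_onFinset_subset
      rw [Finsupp.sum_of_support_subset _ hs _ (by simp)] at this
      simp_rw [fun i : ι => Finsupp.sum_of_support_subset _ hs (fun j xj =>
        star ((Finsupp.onFinset s (fun i => if i ∈ s then ξ i else 0)
          (by simp; tauto)) i) * Matrix.of K i j * xj) (by simp)] at this
      refine this.trans_eq (Finset.sum_congr rfl fun i hi => Finset.sum_congr rfl fun j hj => ?_)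
      simp [hi, hj]
      ring

/-- The Schur product theorem. -/
lemma mul (hK : IsPSD K) (hL : IsPSD L) : IsPSD (fun i j => K i j * L i j) := by
  rw [iff_posSemidef] at *
  exact hK.hadamard hL

lemma add (hK : IsPSD K) (hL : IsPSD L) : IsPSD (fun i j => K i j + L i j) := by
  refine ⟨fun i j => by simp only [hK.1 i j, hL.1 i j], fun s ξ => ?_⟩
  simpa [mul_add, Finset.sum_add_distrib] using add_nonneg (hK.2 s ξ) (hL.2 s ξ)

lemma const_mul (hK : IsPSD K) {c : ℝ} (hc : 0 ≤ c) : IsPSD (fun i j => c * K i j) := by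
  refine ⟨fun i j => by simp only [hK.1 i j], fun s ξ => ?_⟩
  have := mul_nonneg hc (hK.2 s ξ)
  simp_rw [Finset.mul_sum] at this
  refine this.trans_eq (Finset.sum_congr rfl fun i _ => Finset.sum_congr rfl fun j _ => ?_)
  ring

lemma one : IsPSD (fun _ _ : ι => (1 : ℝ)) := by
  refine ⟨fun _ _ => rfl, fun s ξ => ?_⟩
  simp_rw [mul_one, ← Finset.sum_mul_sum]
  exact mul_self_nonneg _

lemma finset_prod {F : Type*} (s : Finset F) {K : F → ι → ι → ℝ} (hK : ∀ f, IsPSD (K f)) :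
    IsPSD (fun i j => ∏ f ∈ s, K f i j) := by
  classical
  induction s using Finset.induction_on with
  | empty => simpa using one
  | insert a s ha ih =>
    simp_rw [Finset.prod_insert ha]
    exact (hK a).mul ih

lemma pow (hK : IsPSD K) (n : ℕ) : IsPSD (fun i j => K i j ^ n) := by
  simpa using finset_prod (Finset.range n) (fun _ => hK)

lemma comp (hK : IsPSD K) (f : κ → ι) : IsPSD (fun a b => K (f a) (f b)) := by
  rw [iff_posSemidef] at *
  exact hK.submatrix f

lemma of_tendsto {Kn : ℕ → ι → ι → ℝ} (h : ∀ n, IsPSD (Kn n))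
    (hl : ∀ i j, Tendsto (fun n => Kn n i j) atTop (𝓝 (K i j))) : IsPSD K := by
  refine ⟨fun i j => ?_, fun s ξ => ?_⟩
  · refine tendsto_nhds_unique (hl i j) ?_
    simp_rw [fun n => (h n).1 i j]
    exact hl j i
  · refine ge_of_tendsto' (tendsto_finsetSum s fun i _ => tendsto_finsetSum s fun j _ =>
      (hl i j).const_mul (ξ i * ξ j)) fun n => (h n).2 s ξ

/-- The exponential of a positive semidefinite kernel is the limit of the kernels
`(1 + K / n) ^ n`. -/
lemma exp (hK : IsPSD K) : IsPSD (fun i j => Real.exp (K i j)) := by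
  refine of_tendsto (Kn := fun n i j => (1 + K i j / n) ^ n) (fun n => ?_)
    fun i j => Real.tendsto_one_add_div_pow_exp (K i j)
  refine IsPSD.pow ?_ n
  have := one.add (hK.const_mul (c := (n : ℝ)⁻¹) (by positivity))
  simpa [div_eq_inv_mul] using this

/-- Congruence: the kernel `C K Cᵀ`. -/
lemma congruence [Fintype ι] (hK : IsPSD K) (c : κ → ι → ℝ) :
    IsPSD (fun a b => ∑ i, ∑ j, K i j * (c a i * c b j)) := by
  refine ⟨fun a b => ?_, fun s ξ => ?_⟩
  · refine Finset.sum_comm.trans ?_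
    refine Finset.sum_congr rfl fun i _ => Finset.sum_congr rfl fun j _ => ?_
    rw [hK.1]; ring
  · have := hK.2 Finset.univ (fun i => ∑ a ∈ s, ξ a * c a i)
    refine this.trans_eq ?_
    have e : ∀ i j, (∑ a ∈ s, ξ a * c a i) * (∑ a ∈ s, ξ a * c a j) * K i j =
        ∑ a ∈ s, ∑ b ∈ s, ξ a * ξ b * (K i j * (c a i * c b j)) := fun i j => by
      rw [Finset.sum_mul_sum, Finset.sum_mul]
      refine Finset.sum_congr rfl fun a _ => ?_
      rw [Finset.sum_mul]
      exact Finset.sum_congr rfl fun b _ => by ring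
    simp_rw [e, Finset.mul_sum]
    rw [Finset.sum_congr rfl fun i _ => Finset.sum_comm, Finset.sum_comm]
    refine Finset.sum_congr rfl fun a _ => ?_
    rw [Finset.sum_congr rfl fun i _ => Finset.sum_comm, Finset.sum_comm]

end IsPSD

lemma PosDefFn.isPSD {F : ℝ → ℝ} (hF : PosDefFn F) (he : ∀ t, F (-t) = F t) :
    IsPSD (fun s t : ℝ => F (s - t)) := by
  refine ⟨fun s t => by beta_reduce; rw [← he, neg_sub], fun s ξ => ?_⟩
  have h := hF s.card (fun i => (s.equivFin.symm i : ℝ)) (fun i => ξ (s.equivFin.symm i : ℝ))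
  rw [Equiv.sum_comp s.equivFin.symm (fun a : s => ∑ j, ξ a * ξ (s.equivFin.symm j : ℝ) *
    F (a - (s.equivFin.symm j : ℝ)))] at h
  simp_rw [fun a : s => Equiv.sum_comp s.equivFin.symm (fun b : s => ξ a * ξ b * F (a - b))] at h
  rw [← Finset.sum_coe_sort s]
  simp_rw [← Finset.sum_coe_sort s (fun j => ξ _ * ξ j * F (_ - j))]
  exact h

/-- The quadratic form of this kernel is half that of `F (s - t)` on the points `± t`. -/
lemma PosDefFn.isPSD_symm {F : ℝ → ℝ} (hF : PosDefFn F) (he : ∀ t, F (-t) = F t) :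
    IsPSD (fun s t : ℝ => F (s - t) + F (s + t)) := by
  refine ⟨fun s t => by beta_reduce; rw [← he (s - t), neg_sub, add_comm s t], fun s ξ => ?_⟩
  have h := ((hF.isPSD he).comp (fun p : ℝ × Bool => if p.2 then p.1 else -p.1)).2
    (s ×ˢ Finset.univ) (fun p => ξ p.1)
  simp only [Finset.sum_product, Fintype.sum_bool, if_true, Bool.false_eq_true, if_false] at h
  have e : ∀ a b : ℝ, F (-a - b) = F (a + b) ∧ F (-a + b) = F (a - b) := fun a b =>
    ⟨by rw [← he]; ring_nf, by rw [← he]; ring_nf⟩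
  simp only [fun a b => (e a b).1, fun a b => (e a b).2, sub_neg_eq_add] at h
  simp_rw [← Finset.sum_add_distrib] at h
  have h2 : (0:ℝ) ≤ 2 * ∑ i ∈ s, ∑ j ∈ s, ξ i * ξ j * (F (i - j) + F (i + j)) := by
    refine h.trans_eq ?_
    simp_rw [Finset.mul_sum]
    refine Finset.sum_congr rfl fun i _ => Finset.sum_congr rfl fun j _ => ?_
    ring
  linarith

/-- With `P = -U`, the exponent is `(β' - β) P (s - t) + β (P (s - t) + P (s + t))`. -/
lemma isPSD_weight {U : ℝ → ℝ} (he : ∀ t, U (-t) = U t) (hU : PosDefFn fun t => -(U t))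
    {β β' : ℝ} (hβ : 0 ≤ β) (hle : β ≤ β') :
    IsPSD (fun s t : ℝ => Real.exp (-β' * U (s - t)) * Real.exp (-β * U (s + t))) := by
  have he' : ∀ t, -(U (-t)) = -(U t) := fun t => by rw [he]
  have h := (((hU.isPSD he').const_mul (sub_nonneg.2 hle)).add
    ((hU.isPSD_symm he').const_mul hβ)).exp
  convert h using 3 with s t
  rw [← Real.exp_add]
  ring_nf

/-! ### The doubling identity on the discrete circle -/

/-- The points of the discrete circle `ZMod N`, as angles in `[0, 2π)`. -/
def ang (N : ℕ) (j : ZMod N) : ℝ := 2 * π * j.val / N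

lemma ang_natCast_int (N : ℕ) [NeZero N] (m : ℤ) :
    ∃ k : ℤ, ang N (m : ZMod N) = 2 * π * m / N + k * (2 * π) := by
  have hN : (N : ℝ) ≠ 0 := Nat.cast_ne_zero.2 (NeZero.ne N)
  have h := Int.emod_add_mul_ediv m N
  refine ⟨-(m / N), ?_⟩
  have h2 : (((m : ZMod N).val : ℤ) : ℝ) = ((m % N : ℤ) : ℝ) := by rw [ZMod.val_intCast]
  have h3 : ((m % N : ℤ) : ℝ) + N * ((m / N : ℤ) : ℝ) = m := by exact_mod_cast h
  unfold ang
  rw [← Int.cast_natCast, h2, ← h3]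
  push_cast
  field_simp
  ring

lemma ang_add (N : ℕ) [NeZero N] (i j : ZMod N) :
    ∃ k : ℤ, ang N (i + j) = ang N i + ang N j + k * (2 * π) := by
  obtain ⟨k, hk⟩ := ang_natCast_int N (i.val + j.val)
  refine ⟨k, ?_⟩
  have : (((i.val + j.val : ℤ)) : ZMod N) = i + j := by simp
  rw [this] at hk
  rw [hk]
  unfold ang
  push_cast
  ring

lemma ang_sub (N : ℕ) [NeZero N] (i j : ZMod N) :
    ∃ k : ℤ, ang N (i - j) = ang N i - ang N j + k * (2 * π) := by
  obtain ⟨k, hk⟩ := ang_natCast_int N (i.val - j.val)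
  refine ⟨k, ?_⟩
  have : (((i.val - j.val : ℤ)) : ZMod N) = i - j := by simp
  rw [this] at hk
  rw [hk]
  unfold ang
  push_cast
  ring

lemma ang_neg (N : ℕ) [NeZero N] (j : ZMod N) :
    ∃ k : ℤ, ang N (-j) = -ang N j + k * (2 * π) := by
  have h0 : ang N 0 = 0 := by simp [ang]
  simpa [h0] using ang_sub N 0 j

/-- For odd `N` the map `(i, j) ↦ (i - j, i + j)` is a bijection of the discrete torus. -/
lemma sum_sub_add {N : ℕ} [NeZero N] (hN : Odd N) (F : ZMod N → ZMod N → ℝ) :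
    ∑ k, ∑ l, F k l = ∑ i, ∑ j, F (i - j) (i + j) := by
  have h2 : IsUnit (2 : ZMod N) := by
    have := (ZMod.isUnit_iff_coprime 2 N).2 (Nat.coprime_two_left.2 hN)
    exact_mod_cast this
  have hinj : Function.Injective (fun p : ZMod N × ZMod N => (p.1 - p.2, p.1 + p.2)) := by
    rintro ⟨i, j⟩ ⟨i', j'⟩ h
    simp only [Prod.mk.injEq] at h
    have hi : i = i' := h2.mul_left_cancel (by linear_combination h.1 + h.2)
    refine Prod.ext hi ?_
    have := h.2
    simp only [hi] at this ⊢
    exact add_left_cancel this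
  have hb := Finite.injective_iff_bijective.1 hinj
  have := hb.sum_comp (fun p : ZMod N × ZMod N => F p.1 p.2)
  rw [Fintype.sum_prod_type, Fintype.sum_prod_type] at this
  exact this.symm

/-- Riemann sum approximation of `dualWgt` with `N` points. -/
def discWgt (U : ℝ → ℝ) (β : ℝ) (N : ℕ) [NeZero N] (n : ℤ) : ℝ :=
  (1 / (N : ℝ)) * ∑ j : ZMod N, Real.exp (-β * U (ang N j)) * Real.cos (n * ang N j)

lemma cos_shift (n k : ℤ) (a : ℝ) : Real.cos (n * (a + k * (2 * π))) = Real.cos (n * a) := by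
  have := Real.cos_add_int_mul_two_pi (n * a) (n * k)
  rw [← this]; push_cast; ring_nf

lemma sin_shift (n k : ℤ) (a : ℝ) : Real.sin (n * (a + k * (2 * π))) = Real.sin (n * a) := by
  have := Real.sin_add_int_mul_two_pi (n * a) (n * k)
  rw [← this]; push_cast; ring_nf

lemma per_shift {U : ℝ → ℝ} (hper : Function.Periodic U (2 * π)) (k : ℤ) (a : ℝ) :
    U (a + k * (2 * π)) = U a := hper.int_mul k a

lemma sum_sin_eq_zero {U : ℝ → ℝ} (hper : Function.Periodic U (2 * π))
    (he : ∀ t, U (-t) = U t) (β : ℝ) (N : ℕ) [NeZero N] (n : ℤ) :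
    ∑ j : ZMod N, Real.exp (-β * U (ang N j)) * Real.sin (n * ang N j) = 0 := by
  have h := Equiv.sum_comp (Equiv.neg (ZMod N))
    (fun j => Real.exp (-β * U (ang N j)) * Real.sin (n * ang N j))
  have h2 : ∀ j : ZMod N, Real.exp (-β * U (ang N (-j))) * Real.sin (n * ang N (-j)) =
      -(Real.exp (-β * U (ang N j)) * Real.sin (n * ang N j)) := fun j => by
    obtain ⟨k, hk⟩ := ang_neg N j
    rw [hk, per_shift hper, he, sin_shift, mul_neg, Real.sin_neg, mul_neg]
  simp only [Equiv.neg_apply, h2, Finset.sum_neg_distrib] at h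
  linarith

/-- Addition formulas turn the product of two weights into a double sum of
`cos (n s + n' t)`; substituting `(s, t) = (u - v, u + v)` decouples the frequencies into
`n + n'` for `u` and `n - n'` for `v`. -/
lemma discWgt_mul {U : ℝ → ℝ} (hper : Function.Periodic U (2 * π))
    (he : ∀ t, U (-t) = U t) (β β' : ℝ) {N : ℕ} [NeZero N] (hN : Odd N) (n n' : ℤ) :
    discWgt U β' N n * discWgt U β N n' = (1 / (N : ℝ)) ^ 2 * ∑ i : ZMod N, ∑ j : ZMod N,
      (Real.exp (-β' * U (ang N i - ang N j)) * Real.exp (-β * U (ang N i + ang N j))) *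
      (Real.cos ((n + n' : ℤ) * ang N i) * Real.cos ((n - n' : ℤ) * ang N j) +
        Real.sin ((n + n' : ℤ) * ang N i) * Real.sin ((n - n' : ℤ) * ang N j)) := by
  have key := sum_sub_add hN (fun k l : ZMod N =>
    (Real.exp (-β' * U (ang N k)) * Real.cos (n * ang N k)) *
      (Real.exp (-β * U (ang N l)) * Real.cos (n' * ang N l)) -
    (Real.exp (-β' * U (ang N k)) * Real.sin (n * ang N k)) *
      (Real.exp (-β * U (ang N l)) * Real.sin (n' * ang N l)))
  simp only [Finset.sum_sub_distrib] at key
  rw [← Finset.sum_mul_sum, ← Finset.sum_mul_sum, sum_sin_eq_zero hper he β', zero_mul, sub_zero,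
    ← Finset.sum_sub_distrib] at key
  simp only [← Finset.sum_sub_distrib] at key
  unfold discWgt
  rw [mul_mul_mul_comm, key, ← sq]
  congr 1
  refine Finset.sum_congr rfl fun i _ => Finset.sum_congr rfl fun j _ => ?_
  obtain ⟨k, hk⟩ := ang_sub N i j
  obtain ⟨l, hl⟩ := ang_add N i j
  rw [hk, hl]
  simp only [per_shift hper, cos_shift, sin_shift]
  have e1 : Real.cos ((n + n' : ℤ) * ang N i) * Real.cos ((n - n' : ℤ) * ang N j) +
        Real.sin ((n + n' : ℤ) * ang N i) * Real.sin ((n - n' : ℤ) * ang N j) =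
      Real.cos (n * (ang N i - ang N j)) * Real.cos (n' * (ang N i + ang N j)) -
        Real.sin (n * (ang N i - ang N j)) * Real.sin (n' * (ang N i + ang N j)) := by
    rw [← Real.cos_sub, ← Real.cos_add]
    congr 1
    push_cast
    ring
  rw [e1]
  ring

lemma isPSD_discWgt {U : ℝ → ℝ} (hper : Function.Periodic U (2 * π))
    (he : ∀ t, U (-t) = U t) (hU : PosDefFn fun t => -(U t)) {β β' : ℝ} (hβ : 0 ≤ β)
    (hle : β ≤ β') {N : ℕ} [NeZero N] (hN : Odd N) (ρ : ℤ) :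
    IsPSD (fun a b : ℤ => discWgt U β' N (ρ + a + b) * discWgt U β N (a - b)) := by
  have hW := (isPSD_weight he hU hβ hle).comp (ang N)
  have h := ((hW.congruence (fun (a : ℤ) i => Real.cos ((ρ + 2 * a : ℤ) * ang N i))).add
    (hW.congruence (fun (a : ℤ) i => Real.sin ((ρ + 2 * a : ℤ) * ang N i)))).const_mul
    (sq_nonneg (1 / (N : ℝ)))
  convert h using 3 with a b
  rw [discWgt_mul hper he β β' hN]
  simp only [← Finset.sum_add_distrib, ← mul_add]
  rw [show ρ + a + b + (a - b) = ρ + 2 * a by ring, show ρ + a + b - (a - b) = ρ + 2 * b by ring]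

/-! ### Passage to the continuous circle -/

lemma tendsto_riemann {g : ℝ → ℝ} (hg : Continuous g) {L : ℝ} (hL : 0 < L) :
    Tendsto (fun N : ℕ => (1 / (N : ℝ)) * ∑ j ∈ Finset.range N, g (L * j / N)) atTop
      (𝓝 ((1 / L) * ∫ t in (0 : ℝ)..L, g t)) := by
  have huc := (isCompact_Icc (a := (0 : ℝ)) (b := L)).uniformContinuousOn_of_continuous
    hg.continuousOn
  rw [Metric.uniformContinuousOn_iff] at huc
  rw [Metric.tendsto_atTop]
  intro ε hε
  obtain ⟨δ, hδ, H⟩ := huc (ε / 2) (by positivity)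
  obtain ⟨N0, hN0⟩ := exists_nat_gt (L / δ)
  refine ⟨N0 + 1, fun N hN => ?_⟩
  have hNpos : (0 : ℝ) < N := by
    have : 0 < N := by omega
    exact_mod_cast this
  have hstep : L / N < δ := by
    have h1 : (N0 : ℝ) + 1 ≤ N := by exact_mod_cast hN
    rw [div_lt_iff₀ hNpos]
    rw [div_lt_iff₀ hδ] at hN0
    nlinarith
  set p : ℕ → ℝ := fun j => L * j / N with hp
  have hp0 : p 0 = 0 := by simp [hp]
  have hpN : p N = L := by simp only [hp]; field_simp
  have hstep' : ∀ j, p (j + 1) - p j = L / N := fun j => by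
    simp only [hp]; push_cast; ring
  have hsum : ∑ j ∈ Finset.range N, ∫ t in (p j)..(p (j + 1)), g t = ∫ t in (0 : ℝ)..L, g t := by
    rw [intervalIntegral.sum_integral_adjacent_intervals fun k _ => hg.intervalIntegrable _ _,
      hp0, hpN]
  have hbound : ∀ j ∈ Finset.range N,
      |(L / N) * g (p j) - ∫ t in (p j)..(p (j + 1)), g t| ≤ (ε / 2) * (L / N) := by
    intro j hj
    have hjN : (j : ℝ) + 1 ≤ N := by exact_mod_cast Finset.mem_range.1 hj
    have hle : p j ≤ p (j + 1) := by
      have := hstep' j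
      have : 0 < L / N := by positivity
      linarith
    have hpj0 : 0 ≤ p j := by simp only [hp]; positivity
    have hpjL : p (j + 1) ≤ L := by
      simp only [hp]
      rw [div_le_iff₀ hNpos]
      push_cast
      nlinarith
    have e : (L / N) * g (p j) - ∫ t in (p j)..(p (j + 1)), g t =
        ∫ t in (p j)..(p (j + 1)), (g (p j) - g t) := by
      rw [intervalIntegral.integral_sub (by simp) (hg.intervalIntegrable _ _),
        intervalIntegral.integral_const, hstep', smul_eq_mul]
    rw [e]
    have := intervalIntegral.norm_integral_le_of_norm_le_const (a := p j) (b := p (j + 1))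
      (f := fun t => g (p j) - g t) (C := ε / 2) (fun t ht => by
        rw [Set.uIoc_of_le hle] at ht
        have h3 := H (p j) ⟨hpj0, hle.trans hpjL⟩ t ⟨hpj0.trans ht.1.le, ht.2.trans hpjL⟩ (by
          rw [Real.dist_eq, abs_lt]
          have := hstep' j
          constructor <;> linarith [ht.1, ht.2])
        rw [Real.dist_eq] at h3
        exact h3.le)
    rwa [hstep', abs_of_pos (by positivity : 0 < L / N), Real.norm_eq_abs] at this
  have htot : |L * ((1 / (N : ℝ)) * ∑ j ∈ Finset.range N, g (p j)) - ∫ t in (0 : ℝ)..L, g t| ≤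
      (ε / 2) * L := by
    rw [← hsum]
    have e : L * ((1 / (N : ℝ)) * ∑ j ∈ Finset.range N, g (p j)) =
        ∑ j ∈ Finset.range N, (L / N) * g (p j) := by
      rw [← Finset.mul_sum]; ring
    rw [e, ← Finset.sum_sub_distrib]
    refine (Finset.abs_sum_le_sum_abs _ _).trans ((Finset.sum_le_sum hbound).trans_eq ?_)
    simp only [Finset.sum_const, Finset.card_range, nsmul_eq_mul]
    field_simp
  rw [Real.dist_eq]
  have e2 : (1 / (N : ℝ)) * ∑ j ∈ Finset.range N, g (p j) - (1 / L) * ∫ t in (0 : ℝ)..L, g t =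
      (1 / L) * (L * ((1 / (N : ℝ)) * ∑ j ∈ Finset.range N, g (p j)) -
        ∫ t in (0 : ℝ)..L, g t) := by
    field_simp
  change |(1 / (N : ℝ)) * ∑ j ∈ Finset.range N, g (p j) - (1 / L) * ∫ t in (0 : ℝ)..L, g t| < ε
  rw [e2, abs_mul, abs_of_pos (by positivity : 0 < 1 / L)]
  calc 1 / L * _ ≤ 1 / L * ((ε / 2) * L) := by gcongr
    _ = ε / 2 := by field_simp
    _ < ε := by linarith

lemma periodic_integrand {U : ℝ → ℝ} (hper : Function.Periodic U (2 * π)) (β : ℝ) (n : ℤ) :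
    Function.Periodic (fun t => Real.exp (-β * U t) * Real.cos (n * t)) (2 * π) := fun t => by
  have h1 := per_shift hper 1 t
  have h2 := cos_shift n 1 t
  simp only [Int.cast_one, one_mul] at h1 h2
  simp only [h1, h2]

lemma tendsto_discWgt {U : ℝ → ℝ} (hper : Function.Periodic U (2 * π)) (hc : Continuous U)
    (β : ℝ) (n : ℤ) :
    Tendsto (fun M : ℕ => discWgt U β (2 * M + 1) n) atTop (𝓝 (dualWgt U β n)) := by
  have h := tendsto_riemann (g := fun t => Real.exp (-β * U t) * Real.cos (n * t))
    (by fun_prop) Real.two_pi_pos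
  have hs : Tendsto (fun M : ℕ => 2 * M + 1) atTop atTop :=
    tendsto_atTop_mono (fun M => by simp only [id]; omega) tendsto_id
  have h' := h.comp hs
  have e : ∫ t in (0 : ℝ)..(2 * π), Real.exp (-β * U t) * Real.cos (n * t) =
      ∫ t in Set.Ioc (-π) π, Real.exp (-β * U t) * Real.cos (n * t) := by
    rw [← intervalIntegral.integral_of_le (by linarith [Real.pi_pos])]
    have := (periodic_integrand hper β n).intervalIntegral_add_eq 0 (-π)
    simp only [zero_add, show -π + 2 * π = π by ring] at this
    exact this
  rw [e] at h'
  refine h'.congr fun M => ?_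
  simp only [Function.comp, discWgt]
  congr 1
  exact (Fin.sum_univ_eq_sum_range (fun j : ℕ => Real.exp (-β * U (2 * π * j / (2 * M + 1 : ℕ))) *
    Real.cos (n * (2 * π * j / (2 * M + 1 : ℕ)))) (2 * M + 1)).symm

/-- The central positivity: for `s = ρ + 2 a`, `d = ρ + 2 b` and heights `n = (s + d) / 2`,
`n' = (s - d) / 2` the product of weights `e^{-𝒱_{β'}(n)} e^{-𝒱_β(n')}` is a positive semidefinite
kernel in `(s, d)`. -/
lemma isPSD_dualWgt {U : ℝ → ℝ} (hper : Function.Periodic U (2 * π)) (hc : Continuous U)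
    (he : ∀ t, U (-t) = U t) (hU : PosDefFn fun t => -(U t)) {β β' : ℝ} (hβ : 0 ≤ β)
    (hle : β ≤ β') (ρ : ℤ) :
    IsPSD (fun a b : ℤ => dualWgt U β' (ρ + a + b) * dualWgt U β (a - b)) :=
  IsPSD.of_tendsto (fun M => isPSD_discWgt hper he hU hβ hle (N := 2 * M + 1) (by simp) ρ)
    fun _ _ => (tendsto_discWgt hper hc β' _).mul (tendsto_discWgt hper hc β _)

lemma dualWgt_zero_pos {U : ℝ → ℝ} (hc : Continuous U) (β : ℝ) : 0 < dualWgt U β 0 := by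
  unfold dualWgt
  have hp := Real.pi_pos
  rw [← intervalIntegral.integral_of_le (by linarith)]
  refine mul_pos (by positivity) (intervalIntegral.intervalIntegral_pos_of_pos
    (Continuous.intervalIntegrable (by fun_prop) _ _) (fun t => ?_) (by linarith))
  simp [Real.exp_pos]

lemma dualWgt_nonneg {U : ℝ → ℝ} (hper : Function.Periodic U (2 * π)) (hc : Continuous U)
    (he : ∀ t, U (-t) = U t) (hU : PosDefFn fun t => -(U t)) {β : ℝ} (hβ : 0 ≤ β) (n : ℤ) :
    0 ≤ dualWgt U β n := by
  -- the diagonal entry at `a = b = 0` of the kernel is `dualWgt U β n * dualWgt U β 0`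
  have h := (isPSD_dualWgt hper hc he hU hβ le_rfl n).2 {0} 1
  simp only [Finset.sum_singleton, Pi.one_apply, one_mul, add_zero, sub_zero] at h
  exact nonneg_of_mul_nonneg_left h (dualWgt_zero_pos hc β)

/-! ### Second moments of the weights -/

lemma integral_cos_int (n : ℤ) :
    ∫ t in (-π)..π, Real.cos (n * t) = if n = 0 then 2 * π else 0 := by
  split_ifs with h
  · simp [h]; ring
  · have hn : (n : ℝ) ≠ 0 := Int.cast_ne_zero.2 h
    rw [intervalIntegral.integral_comp_mul_left (fun t => Real.cos t) hn, integral_cos]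
    simp [Real.sin_int_mul_pi]

/-- Testing `φ` against the (unnormalised) Fejér kernel of `T`, which is nonnegative. -/
lemma fejer_bound {φ : ℝ → ℝ} (hφ : Continuous φ) {M : ℝ} (hM : ∀ t ∈ Set.Icc (-π) π, φ t ≤ M)
    (T : Finset ℤ) :
    ∑ j ∈ T, ∑ k ∈ T, ∫ t in (-π)..π, φ t * Real.cos ((j - k : ℤ) * t) ≤ M * (2 * π * T.card) := by
  have hp := Real.pi_pos
  have hF : ∀ t : ℝ, ∑ j ∈ T, ∑ k ∈ T, Real.cos ((j - k : ℤ) * t) =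
      (∑ j ∈ T, Real.cos (j * t)) ^ 2 + (∑ j ∈ T, Real.sin (j * t)) ^ 2 := fun t => by
    rw [sq, sq, Finset.sum_mul_sum, Finset.sum_mul_sum]
    simp_rw [← Finset.sum_add_distrib]
    refine Finset.sum_congr rfl fun j _ => Finset.sum_congr rfl fun k _ => ?_
    rw [← Real.cos_sub]
    push_cast
    ring_nf
  have hi : ∀ j k : ℤ, IntervalIntegrable (fun t => φ t * Real.cos ((j - k : ℤ) * t))
      volume (-π) π := fun j k => Continuous.intervalIntegrable (by fun_prop) _ _
  have hi' : ∀ j k : ℤ, IntervalIntegrable (fun t => M * Real.cos ((j - k : ℤ) * t))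
      volume (-π) π := fun j k => Continuous.intervalIntegrable (by fun_prop) _ _
  have hs : ∀ j ∈ T, IntervalIntegrable (fun t => ∑ k ∈ T, φ t * Real.cos ((j - k : ℤ) * t))
      volume (-π) π := fun j _ => Continuous.intervalIntegrable (by fun_prop) _ _
  have hs' : ∀ j ∈ T, IntervalIntegrable (fun t => ∑ k ∈ T, M * Real.cos ((j - k : ℤ) * t))
      volume (-π) π := fun j _ => Continuous.intervalIntegrable (by fun_prop) _ _
  have e1 : ∑ j ∈ T, ∑ k ∈ T, ∫ t in (-π)..π, φ t * Real.cos ((j - k : ℤ) * t) =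
      ∫ t in (-π)..π, ∑ j ∈ T, ∑ k ∈ T, φ t * Real.cos ((j - k : ℤ) * t) := by
    rw [intervalIntegral.integral_finsetSum hs]
    exact Finset.sum_congr rfl fun j _ => (intervalIntegral.integral_finsetSum fun k _ => hi j k).symm
  have e2 : ∫ t in (-π)..π, ∑ j ∈ T, ∑ k ∈ T, M * Real.cos ((j - k : ℤ) * t) =
      M * (2 * π * T.card) := by
    rw [intervalIntegral.integral_finsetSum hs']
    rw [Finset.sum_congr rfl fun j _ => intervalIntegral.integral_finsetSum fun k _ => hi' j k]
    simp_rw [intervalIntegral.integral_const_mul, integral_cos_int, sub_eq_zero]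
    simp
    ring
  rw [e1, ← e2]
  refine intervalIntegral.integral_mono_on (by linarith)
    (Continuous.intervalIntegrable (by fun_prop) _ _)
    (Continuous.intervalIntegrable (by fun_prop) _ _) fun t ht => ?_
  simp_rw [← Finset.mul_sum, hF]
  exact mul_le_mul_of_nonneg_right (hM t ht) (by positivity)

/-- A continuous function with nonnegative Fourier coefficients has summable coefficients. -/
lemma summable_fourier_of_nonneg {φ : ℝ → ℝ} (hφ : Continuous φ)
    (hnn : ∀ n : ℤ, 0 ≤ ∫ t in (-π)..π, φ t * Real.cos (n * t)) :
    Summable fun n : ℤ => ∫ t in (-π)..π, φ t * Real.cos (n * t) := by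
  obtain ⟨M, hM⟩ := (isCompact_Icc (a := -π) (b := π)).bddAbove_image hφ.continuousOn
  have hM' : ∀ t ∈ Set.Icc (-π) π, φ t ≤ M := fun t ht => hM ⟨t, ht, rfl⟩
  set b : ℤ → ℝ := fun n => ∫ t in (-π)..π, φ t * Real.cos (n * t) with hb
  refine summable_of_sum_le (c := M * (2 * π) * 3) hnn fun S => ?_
  -- all differences `m ∈ S` satisfy `|m| ≤ K`, so each occurs at least `K` times in `[0, 3 K)`
  obtain ⟨K, hK0, hK⟩ : ∃ K : ℕ, 0 < K ∧ ∀ m ∈ S, |m| ≤ (K : ℤ) := by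
    refine ⟨S.sup Int.natAbs + 1, by omega, fun m hm => ?_⟩
    have := Finset.le_sup (f := Int.natAbs) hm
    rw [Int.abs_eq_natAbs]
    omega
  have h1 : ∀ k ∈ Finset.Ico (K : ℤ) (2 * K), ∑ m ∈ S, b m ≤
      ∑ j ∈ Finset.Ico (0 : ℤ) (3 * K), b (j - k) := by
    intro k hk
    rw [Finset.mem_Ico] at hk
    have e : ∑ m ∈ S, b m = ∑ j ∈ S.image (· + k), b (j - k) := by
      rw [Finset.sum_image fun _ _ _ _ h => add_right_cancel h]
      simp
    rw [e]
    refine Finset.sum_le_sum_of_subset_of_nonneg (fun j hj => ?_) fun j _ _ => hnn _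
    obtain ⟨m, hm, rfl⟩ := Finset.mem_image.1 hj
    have := abs_le.1 (hK m hm)
    rw [Finset.mem_Ico]
    omega
  have h2 : (K : ℝ) * ∑ m ∈ S, b m ≤ ∑ k ∈ Finset.Ico (0 : ℤ) (3 * K),
      ∑ j ∈ Finset.Ico (0 : ℤ) (3 * K), b (j - k) := by
    have := Finset.sum_le_sum h1
    rw [Finset.sum_const, Int.card_Ico, nsmul_eq_mul] at this
    have hc : ((2 * (K : ℤ) - K).toNat : ℝ) = K := by
      have : (2 * (K : ℤ) - K).toNat = K := by omega
      rw [this]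
    rw [hc] at this
    refine this.trans (Finset.sum_le_sum_of_subset_of_nonneg (fun j hj => ?_)
      fun j _ _ => Finset.sum_nonneg fun _ _ => hnn _)
    rw [Finset.mem_Ico] at hj ⊢
    omega
  have h3 := fejer_bound hφ hM' (Finset.Ico (0 : ℤ) (3 * K))
  rw [Finset.sum_comm, Int.card_Ico] at h3
  have hc : ((3 * (K : ℤ) - 0).toNat : ℝ) = 3 * K := by
    have : (3 * (K : ℤ) - 0).toNat = 3 * K := by omega
    rw [this]; push_cast; ring
  rw [hc] at h3
  have h4 := h2.trans h3
  have hK' : (0 : ℝ) < K := by exact_mod_cast hK0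
  refine le_of_mul_le_mul_left (h4.trans_eq ?_) hK'
  ring

/-- Integration by parts twice, in the form
`(n g sin(n·) + g' cos(n·))' = n² g cos(n·) + g'' cos(n·)`. -/
lemma sq_mul_integral_cos {g : ℝ → ℝ} (hg : ContDiff ℝ 2 g) (hper : Function.Periodic g (2 * π))
    (n : ℤ) : (n : ℝ) ^ 2 * ∫ t in (-π)..π, g t * Real.cos (n * t) =
      ∫ t in (-π)..π, -(deriv (deriv g) t) * Real.cos (n * t) := by
  have hg1 : ContDiff ℝ 1 (deriv g) := ContDiff.deriv' (by rwa [one_add_one_eq_two])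
  have hg2 : Continuous (deriv (deriv g)) := hg1.continuous_deriv le_rfl
  have hgc := hg.continuous
  have hper' : deriv g π = deriv g (-π) := by
    have h : (fun t => g (t + 2 * π)) = g := funext hper
    have h2 := deriv_comp_add_const g (2 * π) (-π)
    rw [h] at h2
    rw [h2]
    ring_nf
  have hD : ∀ t ∈ Set.uIcc (-π) π, HasDerivAt
      (fun t => n * (g t * Real.sin (n * t)) + deriv g t * Real.cos (n * t))
      ((n : ℝ) ^ 2 * (g t * Real.cos (n * t)) - -(deriv (deriv g) t) * Real.cos (n * t)) t := by
    intro t _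
    have d1 : HasDerivAt g (deriv g t) t := (hg.differentiable (by norm_num) t).hasDerivAt
    have d2 : HasDerivAt (deriv g) (deriv (deriv g) t) t :=
      (hg1.differentiable (by norm_num) t).hasDerivAt
    have d0 : HasDerivAt (fun t : ℝ => (n : ℝ) * t) n t := by
      simpa using (hasDerivAt_id t).const_mul (n : ℝ)
    have := ((d1.mul d0.sin).const_mul (n : ℝ)).add (d2.mul d0.cos)
    refine this.congr_deriv ?_
    ring
  have hI := intervalIntegral.integral_eq_sub_of_hasDerivAt hD
    (Continuous.intervalIntegrable (by fun_prop) _ _)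
  rw [intervalIntegral.integral_sub (Continuous.intervalIntegrable (by fun_prop) _ _)
    (Continuous.intervalIntegrable (by fun_prop) _ _), intervalIntegral.integral_const_mul] at hI
  simp only [mul_neg, Real.sin_neg, Real.cos_neg, Real.sin_int_mul_pi, hper'] at hI
  linarith

lemma dualWgt_eq (U : ℝ → ℝ) (β : ℝ) (n : ℤ) :
    dualWgt U β n = (1 / (2 * π)) * ∫ t in (-π)..π, Real.exp (-β * U t) * Real.cos (n * t) := by
  rw [intervalIntegral.integral_of_le (by linarith [Real.pi_pos])]
  rfl

lemma summable_dualWgt {U : ℝ → ℝ} (hper : Function.Periodic U (2 * π)) (hC : ContDiff ℝ 2 U)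
    (he : ∀ t, U (-t) = U t) (hU : PosDefFn fun t => -(U t)) {β : ℝ} (hβ : 0 ≤ β) :
    Summable fun n : ℤ => (1 + (n : ℝ) ^ 2) * dualWgt U β n := by
  have hw := dualWgt_nonneg hper hC.continuous he hU hβ
  set g : ℝ → ℝ := fun t => Real.exp (-β * U t) with hgdef
  have hg : ContDiff ℝ 2 g := by fun_prop
  have hgper : Function.Periodic g (2 * π) := fun t => by simp only [hgdef, hper t]
  have hg1 : ContDiff ℝ 1 (deriv g) := ContDiff.deriv' (by rwa [one_add_one_eq_two])
  have hg2 : Continuous (deriv (deriv g)) := hg1.continuous_deriv le_rfl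
  have key : ∀ n : ℤ, ∫ t in (-π)..π, -(deriv (deriv g) t) * Real.cos (n * t) =
      2 * π * ((n : ℝ) ^ 2 * dualWgt U β n) := fun n => by
    have hp := Real.pi_ne_zero
    rw [← sq_mul_integral_cos hg hgper n, dualWgt_eq]
    simp only [hgdef]
    field_simp
  have hs := summable_fourier_of_nonneg hg2.neg fun n => by
    have := hw n
    have hp := Real.pi_pos
    simp only [Pi.neg_apply]
    rw [key n]
    positivity
  simp only [Pi.neg_apply, key] at hs
  have hs2 : Summable fun n : ℤ => (n : ℝ) ^ 2 * dualWgt U β n := by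
    rwa [summable_mul_left_iff (by positivity)] at hs
  -- away from `n = 0` the weight is dominated by `n ^ 2` times itself
  refine Summable.of_nonneg_of_le (fun n => mul_nonneg (by positivity) (hw n)) (fun n => ?_)
    ((hs2.mul_left 2).add (hasSum_ite_eq (0 : ℤ) (dualWgt U β 0)).summable)
  split_ifs with h
  · simp [h]
  · have : (1 : ℝ) ≤ (n : ℝ) ^ 2 := by
      have : (1 : ℤ) ≤ n ^ 2 := by nlinarith [Int.one_le_abs h, sq_abs n]
      exact_mod_cast this
    nlinarith [hw n]

/-! ### The pair of independent height functions -/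

lemma tsum_nonneg_of_square {α : Type*} {F : α × α → ℝ} (hF : Summable F)
    (h : ∀ s : Finset α, 0 ≤ ∑ i ∈ s, ∑ j ∈ s, F (i, j)) : 0 ≤ ∑' p, F p := by
  have ht : Tendsto (fun s : Finset α => s ×ˢ s) atTop atTop :=
    tendsto_atTop_finset_of_monotone (fun s t hst => Finset.product_subset_product hst hst)
      fun p => by
        classical
        exact ⟨{p.1, p.2}, by simp⟩
  refine ge_of_tendsto' (hF.hasSum.comp ht) fun s => ?_
  simpa [Finset.sum_product] using h s

/-- Height functions pinned to `0` at the boundary vertex. -/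
abbrev Height (V : Type*) (bd : V) := {h : V → ℤ // h bd = 0}

/-- Parity classes of height functions, encoded by their `{0, 1}`-valued representatives. -/
abbrev Parity (V : Type*) (bd : V) := {r : V → ℤ // r bd = 0 ∧ ∀ v, r v = 0 ∨ r v = 1}

/-- A pair `(h, h')` is encoded by the common parity class `r` of `h + h'` and `h - h'`, together
with `a`, `b` such that `h + h' = r + 2 a` and `h - h' = r + 2 b`. -/
def pairEquiv (V : Type*) (bd : V) :
    Parity V bd × (Height V bd × Height V bd) ≃ Height V bd × Height V bd where
  toFun p := (⟨fun v => p.1.1 v + p.2.1.1 v + p.2.2.1 v, by simp [p.1.2.1, p.2.1.2, p.2.2.2]⟩,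
    ⟨fun v => p.2.1.1 v - p.2.2.1 v, by simp [p.2.1.2, p.2.2.2]⟩)
  invFun q := (⟨fun v => (q.1.1 v + q.2.1 v) % 2, by simp [q.1.2, q.2.2], fun v => by lia⟩,
    (⟨fun v => (q.1.1 v + q.2.1 v) / 2, by simp [q.1.2, q.2.2]⟩,
      ⟨fun v => (q.1.1 v - q.2.1 v) / 2, by simp [q.1.2, q.2.2]⟩))
  left_inv := by
    rintro ⟨⟨r, hr, hr'⟩, ⟨a, ha⟩, ⟨b, hb⟩⟩
    simp only [Prod.mk.injEq, Subtype.mk.injEq]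
    refine ⟨?_, ?_, ?_⟩ <;> funext v <;> rcases hr' v with h | h <;> lia
  right_inv := by
    rintro ⟨⟨h, hh⟩, ⟨h', hh'⟩⟩
    simp only [Prod.mk.injEq, Subtype.mk.injEq]
    refine ⟨?_, ?_⟩ <;> funext v <;> lia

section Pair

variable {V E : Type*} [Fintype E] (src tgt : E → V) (bd x y : V)

/-- The unnormalised probability of a height function for edge weights `w`. -/
def wt (w : E → ℤ → ℝ) (h : Height V bd) : ℝ := ∏ f, w f (grad src tgt h.1 f)

/-- Within one parity class, `(h_x - h_y)² - (h'_x - h'_y)²` factors as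
`(s_x - s_y) (d_x - d_y)` with `s = h + h'`, `d = h - h'`, and is summed against a positive
semidefinite kernel in `(s, d)`. -/
lemma pair_tsum_nonneg {w w' : E → ℤ → ℝ}
    (hK : ∀ f (ρ : ℤ), IsPSD (fun a b : ℤ => w' f (ρ + a + b) * w f (a - b)))
    (hs : Summable fun p : Height V bd × Height V bd =>
      (((p.1.1 x - p.1.1 y : ℤ) : ℝ) ^ 2 - ((p.2.1 x - p.2.1 y : ℤ) : ℝ) ^ 2) *
        (wt src tgt bd w' p.1 * wt src tgt bd w p.2)) :
    0 ≤ ∑' p : Height V bd × Height V bd,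
      (((p.1.1 x - p.1.1 y : ℤ) : ℝ) ^ 2 - ((p.2.1 x - p.2.1 y : ℤ) : ℝ) ^ 2) *
        (wt src tgt bd w' p.1 * wt src tgt bd w p.2) := by
  rw [← (pairEquiv V bd).tsum_eq]
  have hs' := (pairEquiv V bd).summable_iff.2 hs
  refine le_of_le_of_eq ?_ (Summable.tsum_prod hs').symm
  refine tsum_nonneg fun r => tsum_nonneg_of_square (hs'.prod_factor r) fun s => ?_
  have hP : IsPSD (fun a b : Height V bd => ∏ f, w' f (grad src tgt r.1 f +
      grad src tgt a.1 f + grad src tgt b.1 f) * w f (grad src tgt a.1 f - grad src tgt b.1 f)) :=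
    IsPSD.finset_prod Finset.univ fun f =>
      (hK f (grad src tgt r.1 f)).comp fun a : Height V bd => grad src tgt a.1 f
  refine (hP.2 s fun a => ((r.1 x - r.1 y + 2 * (a.1 x - a.1 y) : ℤ) : ℝ)).trans_eq ?_
  refine Finset.sum_congr rfl fun a _ => Finset.sum_congr rfl fun b _ => ?_
  simp only [Function.comp, pairEquiv, Equiv.coe_fn_mk, wt, ← Finset.prod_mul_distrib]
  congr 1
  · push_cast; ring
  · refine Finset.prod_congr rfl fun f _ => ?_
    congr 2 <;> simp only [grad] <;> ring

end Pair

/-! ### Summability and connectedness -/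

section Linked

variable {V E : Type*} [Fintype E] (src tgt : E → V)

/-- Two vertices are linked if height differences between them are controlled by the gradient;
this is a form of connectedness that avoids paths. -/
def Linked (u v : V) : Prop :=
  ∃ C : ℝ, 0 ≤ C ∧ ∀ h : V → ℤ, |((h u - h v : ℤ) : ℝ)| ≤ C * ∑ f, |((grad src tgt h f : ℤ) : ℝ)|

variable {src tgt}

lemma Linked.refl (u : V) : Linked src tgt u u := ⟨0, le_rfl, by simp⟩

lemma Linked.symm {u v : V} (h : Linked src tgt u v) : Linked src tgt v u := by
  obtain ⟨C, hC, H⟩ := h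
  refine ⟨C, hC, fun h => ?_⟩
  have := H h
  rwa [← abs_neg, ← Int.cast_neg, neg_sub] at this

lemma Linked.trans {u v z : V} (h : Linked src tgt u v) (h' : Linked src tgt v z) :
    Linked src tgt u z := by
  obtain ⟨C, hC, H⟩ := h
  obtain ⟨C', hC', H'⟩ := h'
  refine ⟨C + C', by positivity, fun h => ?_⟩
  have e : ((h u - h z : ℤ) : ℝ) = ((h u - h v : ℤ) : ℝ) + ((h v - h z : ℤ) : ℝ) := by
    push_cast; ring
  rw [e, add_mul]
  exact (abs_add_le _ _).trans (add_le_add (H h) (H' h))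

lemma Linked.edge (f : E) : Linked src tgt (tgt f) (src f) := by
  refine ⟨1, zero_le_one, fun h => ?_⟩
  rw [one_mul]
  exact Finset.single_le_sum (f := fun f => |((grad src tgt h f : ℤ) : ℝ)|)
    (fun _ _ => abs_nonneg _) (Finset.mem_univ f)

lemma grad_injective {bd : V} (hconn : ∀ v, Linked src tgt v bd) :
    Function.Injective fun h : Height V bd => grad src tgt h.1 := by
  intro h h' hh
  refine Subtype.ext (funext fun v => ?_)
  obtain ⟨C, _, H⟩ := hconn v
  have h0 : ∀ f, grad src tgt (h.1 - h'.1) f = 0 := fun f => by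
    have := congrFun hh f
    simp only [grad, Pi.sub_apply] at this ⊢
    linarith
  have := H (h.1 - h'.1)
  simp only [h0, Int.cast_zero, abs_zero, Finset.sum_const_zero, mul_zero, Pi.sub_apply, h.2, h'.2,
    sub_self, sub_zero] at this
  have := abs_eq_zero.1 (le_antisymm this (abs_nonneg _))
  have : h.1 v - h'.1 v = 0 := by exact_mod_cast this
  linarith

lemma summable_pi_prod {u : E → ℤ → ℝ} (hu : ∀ f n, 0 ≤ u f n) (hs : ∀ f, Summable (u f)) :
    Summable fun m : E → ℤ => ∏ f, u f (m f) := by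
  classical
  refine summable_of_sum_le (c := ∏ f, ∑' n, u f n)
    (fun m => Finset.prod_nonneg fun f _ => hu f _) fun S => ?_
  calc ∑ m ∈ S, ∏ f, u f (m f)
      ≤ ∑ m ∈ Fintype.piFinset fun f => S.image fun m => m f, ∏ f, u f (m f) :=
        Finset.sum_le_sum_of_subset_of_nonneg
          (fun m hm => Fintype.mem_piFinset.2 fun f => Finset.mem_image_of_mem _ hm)
          fun m _ _ => Finset.prod_nonneg fun f _ => hu f _
    _ = ∏ f, ∑ n ∈ S.image fun m => m f, u f n := (Finset.prod_univ_sum _ _).symm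
    _ ≤ ∏ f, ∑' n, u f n := Finset.prod_le_prod
        (fun f _ => Finset.sum_nonneg fun n _ => hu f n)
        fun f _ => (hs f).sum_le_tsum _ fun n _ => hu f n

variable {bd : V} {w : E → ℤ → ℝ}

lemma wt_nonneg (hw : ∀ f n, 0 ≤ w f n) (h : Height V bd) : 0 ≤ wt src tgt bd w h :=
  Finset.prod_nonneg fun f _ => hw f _

lemma wt_zero_pos (hw0 : ∀ f, 0 < w f 0) : 0 < wt src tgt bd w ⟨0, rfl⟩ :=
  Finset.prod_pos fun f _ => by simpa [grad] using hw0 f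

lemma summable_prod_sq (hconn : ∀ v, Linked src tgt v bd) (hw : ∀ f n, 0 ≤ w f n)
    (hs : ∀ f, Summable fun n : ℤ => (1 + (n : ℝ) ^ 2) * w f n) :
    Summable fun h : Height V bd =>
      (∏ f, (1 + ((grad src tgt h.1 f : ℤ) : ℝ) ^ 2)) * wt src tgt bd w h := by
  have := (summable_pi_prod (fun f n => mul_nonneg (by positivity) (hw f n)) hs).comp_injective
    (grad_injective hconn)
  refine this.congr fun h => ?_
  simp [wt, Finset.prod_mul_distrib]

lemma summable_wt (hconn : ∀ v, Linked src tgt v bd) (hw : ∀ f n, 0 ≤ w f n)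
    (hs : ∀ f, Summable fun n : ℤ => (1 + (n : ℝ) ^ 2) * w f n) :
    Summable (wt src tgt bd w) := by
  refine Summable.of_nonneg_of_le (wt_nonneg hw) (fun h => ?_) (summable_prod_sq hconn hw hs)
  refine le_mul_of_one_le_left (wt_nonneg hw h) ?_
  exact Finset.one_le_prod fun f _ => le_add_of_nonneg_right (sq_nonneg _)

lemma summable_sq_wt (hconn : ∀ v, Linked src tgt v bd) (hw : ∀ f n, 0 ≤ w f n)
    (hs : ∀ f, Summable fun n : ℤ => (1 + (n : ℝ) ^ 2) * w f n) (x y : V) :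
    Summable fun h : Height V bd => ((h.1 x - h.1 y : ℤ) : ℝ) ^ 2 * wt src tgt bd w h := by
  obtain ⟨C, hC, H⟩ := (hconn x).trans (hconn y).symm
  refine Summable.of_nonneg_of_le (fun h => mul_nonneg (sq_nonneg _) (wt_nonneg hw h))
    (fun h => ?_) ((summable_prod_sq hconn hw hs).mul_left
      (C ^ 2 * ((Fintype.card E : ℝ) * Fintype.card E)))
  rw [← mul_assoc]
  refine mul_le_mul_of_nonneg_right ?_ (wt_nonneg hw h)
  have h1 : ((h.1 x - h.1 y : ℤ) : ℝ) ^ 2 ≤ (C * ∑ f, |((grad src tgt h.1 f : ℤ) : ℝ)|) ^ 2 := by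
    rw [← sq_abs ((h.1 x - h.1 y : ℤ) : ℝ)]
    exact pow_le_pow_left₀ (abs_nonneg _) (H h.1) 2
  have h2 := sq_sum_le_card_mul_sum_sq (s := Finset.univ)
    (f := fun f => |((grad src tgt h.1 f : ℤ) : ℝ)|)
  have h3 : ∀ f ∈ Finset.univ, |((grad src tgt h.1 f : ℤ) : ℝ)| ^ 2 ≤
      ∏ f, (1 + ((grad src tgt h.1 f : ℤ) : ℝ) ^ 2) := fun f _ => by
    classical
    rw [sq_abs, ← Finset.mul_prod_erase _ _ (Finset.mem_univ f)]
    have : (1 : ℝ) ≤ ∏ f ∈ Finset.univ.erase f, (1 + ((grad src tgt h.1 f : ℤ) : ℝ) ^ 2) :=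
      Finset.one_le_prod fun f _ => le_add_of_nonneg_right (sq_nonneg _)
    nlinarith [sq_nonneg ((grad src tgt h.1 f : ℤ) : ℝ)]
  have h4 := Finset.sum_le_card_nsmul _ _ _ h3
  rw [nsmul_eq_mul, Finset.card_univ] at h4
  rw [Finset.card_univ] at h2
  rw [mul_pow] at h1
  refine h1.trans ?_
  rw [mul_assoc, mul_assoc]
  exact mul_le_mul_of_nonneg_left (h2.trans (mul_le_mul_of_nonneg_left h4 (by positivity)))
    (sq_nonneg C)

/-- On a disconnected graph the partition function diverges: a component away from the boundary
can be shifted by any integer without changing the weight. -/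
lemma not_summable_wt (hconn : ¬ ∀ v, Linked src tgt v bd) (hw0 : ∀ f, 0 < w f 0) :
    ¬ Summable (wt src tgt bd w) := by
  classical
  push Not at hconn
  obtain ⟨v, hv⟩ := hconn
  intro hs
  let k : ℤ → Height V bd := fun c => ⟨fun u => if Linked src tgt u bd then 0 else c,
    by simp [Linked.refl]⟩
  have hk : Function.Injective k := fun c c' h => by
    have := congrFun (congrArg Subtype.val h) v
    simpa [k, hv] using this
  have hc : ∀ c, wt src tgt bd w (k c) = wt src tgt bd w ⟨0, rfl⟩ := fun c => by
    refine Finset.prod_congr rfl fun f _ => ?_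
    congr 1
    have : Linked src tgt (tgt f) bd ↔ Linked src tgt (src f) bd :=
      ⟨fun h => (Linked.edge f).symm.trans h, fun h => (Linked.edge f).trans h⟩
    simp [grad, k, this]
  have h := hs.comp_injective hk
  simp only [Function.comp_def, hc, summable_const_iff] at h
  exact (wt_zero_pos hw0).ne' h

end Linked

/-- **Monotonicity of the variance of the height function in the inverse temperature.**
In the edge-dependent setup (each edge `f` carries an even C² potential `𝒰_f` with `-𝒰_f`
positive definite and an inverse temperature `β_f ≥ 0`), for all vertices `x, y` and every
edge `e`, the variance `ν_{β,★}[(h_x - h_y)²]` is nondecreasing in `β_e`. -/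
theorem variance_monotone_in_beta
    {V E : Type*} [Fintype V] [Fintype E]
    (src tgt : E → V) (bd : V)
    (U : E → ℝ → ℝ)
    (hper : ∀ e, Function.Periodic (U e) (2 * π))
    (heven : ∀ e t, U e (-t) = U e t)
    (hC2 : ∀ e, ContDiff ℝ 2 (U e))
    (hpd : ∀ e, PosDefFn fun t => -(U e t))
    (x y : V) (e : E)
    (β β' : E → ℝ)
    (hβ : ∀ f, 0 ≤ β f) (hβ' : ∀ f, 0 ≤ β' f)
    (hagree : ∀ f, f ≠ e → β f = β' f) (hle : β e ≤ β' e) :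
    (∑' h : {h : V → ℤ // h bd = 0},
        ((h.1 x - h.1 y : ℤ) : ℝ) ^ 2 * ∏ f, dualWgt (U f) (β f) (grad src tgt h.1 f)) /
      (∑' h : {h : V → ℤ // h bd = 0}, ∏ f, dualWgt (U f) (β f) (grad src tgt h.1 f))
    ≤ (∑' h : {h : V → ℤ // h bd = 0},
        ((h.1 x - h.1 y : ℤ) : ℝ) ^ 2 * ∏ f, dualWgt (U f) (β' f) (grad src tgt h.1 f)) /
      (∑' h : {h : V → ℤ // h bd = 0}, ∏ f, dualWgt (U f) (β' f) (grad src tgt h.1 f)) := by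
  have hc : ∀ f, Continuous (U f) := fun f => (hC2 f).continuous
  have hnn : ∀ f n, 0 ≤ dualWgt (U f) (β f) n := fun f =>
    dualWgt_nonneg (hper f) (hc f) (heven f) (hpd f) (hβ f)
  have hnn' : ∀ f n, 0 ≤ dualWgt (U f) (β' f) n := fun f =>
    dualWgt_nonneg (hper f) (hc f) (heven f) (hpd f) (hβ' f)
  have hle' : ∀ f, β f ≤ β' f := fun f => by
    by_cases h : f = e
    · exact h ▸ hle
    · exact (hagree f h).le
  change (∑' h : Height V bd, ((h.1 x - h.1 y : ℤ) : ℝ) ^ 2 *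
        wt src tgt bd (fun f => dualWgt (U f) (β f)) h) /
      (∑' h : Height V bd, wt src tgt bd (fun f => dualWgt (U f) (β f)) h) ≤
    (∑' h : Height V bd, ((h.1 x - h.1 y : ℤ) : ℝ) ^ 2 *
        wt src tgt bd (fun f => dualWgt (U f) (β' f)) h) /
      (∑' h : Height V bd, wt src tgt bd (fun f => dualWgt (U f) (β' f)) h)
  by_cases hconn : ∀ v, Linked src tgt v bd
  · have hs := fun f => summable_dualWgt (hper f) (hC2 f) (heven f) (hpd f) (hβ f)
    have hs' := fun f => summable_dualWgt (hper f) (hC2 f) (heven f) (hpd f) (hβ' f)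
    have hZ := summable_wt hconn hnn hs
    have hZ' := summable_wt hconn hnn' hs'
    have hN := summable_sq_wt hconn hnn hs x y
    have hN' := summable_sq_wt hconn hnn' hs' x y
    have hZpos := hZ.tsum_pos (wt_nonneg hnn) ⟨0, rfl⟩
      (wt_zero_pos fun f => dualWgt_zero_pos (hc f) (β f))
    have hZpos' := hZ'.tsum_pos (wt_nonneg hnn') ⟨0, rfl⟩
      (wt_zero_pos fun f => dualWgt_zero_pos (hc f) (β' f))
    have hP1 := hN'.mul_of_nonneg hZ (fun h => mul_nonneg (sq_nonneg _) (wt_nonneg hnn' h))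
      (wt_nonneg hnn)
    have hP2 := hZ'.mul_of_nonneg hN (wt_nonneg hnn')
      (fun h => mul_nonneg (sq_nonneg _) (wt_nonneg hnn h))
    have hsub := hP1.sub hP2
    have key := pair_tsum_nonneg src tgt bd x y
      (fun f ρ => isPSD_dualWgt (hper f) (hc f) (heven f) (hpd f) (hβ f) (hle' f) ρ)
      (hsub.congr fun p => by ring)
    rw [div_le_div_iff₀ hZpos hZpos']
    have e1 := hN'.tsum_mul_tsum hZ hP1
    have e2 := hZ'.tsum_mul_tsum hN hP2
    have e3 := hP1.tsum_sub hP2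
    have e4 : (∑' p : Height V bd × Height V bd,
        (((p.1.1 x - p.1.1 y : ℤ) : ℝ) ^ 2 - ((p.2.1 x - p.2.1 y : ℤ) : ℝ) ^ 2) *
          (wt src tgt bd (fun f => dualWgt (U f) (β' f)) p.1 *
            wt src tgt bd (fun f => dualWgt (U f) (β f)) p.2)) =
        ∑' p : Height V bd × Height V bd, (((p.1.1 x - p.1.1 y : ℤ) : ℝ) ^ 2 *
          wt src tgt bd (fun f => dualWgt (U f) (β' f)) p.1 *
            wt src tgt bd (fun f => dualWgt (U f) (β f)) p.2 -
          wt src tgt bd (fun f => dualWgt (U f) (β' f)) p.1 *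
            (((p.2.1 x - p.2.1 y : ℤ) : ℝ) ^ 2 *
              wt src tgt bd (fun f => dualWgt (U f) (β f)) p.2)) :=
      tsum_congr fun p => by ring
    rw [e4, e3, ← e1, ← e2] at key
    linarith
  -- both partition functions diverge, so both quotients have the junk denominator `0`
  · rw [tsum_eq_zero_of_not_summable
        (not_summable_wt hconn fun f => dualWgt_zero_pos (hc f) (β f)),
      tsum_eq_zero_of_not_summable
        (not_summable_wt hconn fun f => dualWgt_zero_pos (hc f) (β' f)), div_zero, div_zero]
end
end
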